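/- arXiv:1803.01388 — 9 statements merged into one kernel-verified Lean document; each statement's English description precedes it below -/
import Mathlib

section
/- Let K be a field of characteristic zero. Every artinian homogeneous ideal I in the polynomial ring K[x,y] has the strong Lefschetz property (and consequently also the weak Lefschetz property): there exists a linear form ℓ such that for all integers j and k the multiplication map ×ℓ^k : (K[x,y]/I)_j → (K[x,y]/I)_{j+k} has maximal rank. -/
open MvPolynomial

/-- The degree-`j` graded component of `S/I` (for `S = K[x_1,…,x_n]`), as a `K`-submodule of
the quotient: the image of the space of homogeneous polynomials of degree `j`.
For negative `j` it is the zero submodule. -/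
noncomputable def gradedPiece {K : Type*} [Field K] {n : ℕ}
    (I : Ideal (MvPolynomial (Fin n) K)) (j : ℤ) :
    Submodule K (MvPolynomial (Fin n) K ⧸ I) :=
  if 0 ≤ j then
    (homogeneousSubmodule (Fin n) K j.toNat).map (Ideal.Quotient.mkₐ K I).toLinearMap
  else ⊥

/-- A linear endomorphism `f` has maximal rank from `A` to `B` if it is injective on `A`
or maps `A` onto `B`. -/
def MaxRankOn {K M : Type*} [Field K] [AddCommGroup M] [Module K M]
    (f : M →ₗ[K] M) (A B : Submodule K M) : Prop :=
  (∀ x ∈ A, f x = 0 → x = 0) ∨ B ≤ A.map f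

/-!
Dehomogenizing by `y = 1` identifies the forms of degree `d` with the polynomials of degree at most
`d`, the part `I_d` with a finite-dimensional space `W_d` of polynomials, and the linear form
`x - a y` with `X - a`. For `c = dim W_d` we look for points `a` such that no nonzero element of
`W_d` is divisible by `(X - a) ^ c`. At such a point `W_d` is a complement of the multiples of
`(X - a) ^ c`, so multiplication by `(x - a y) ^ k` into degree `d` is injective modulo `I` when
`c ≤ k`, and surjective modulo `I` when `k ≤ c`.

In characteristic zero all but finitely many `a` qualify, by induction on the dimension. Fix
`0 ≠ g ∈ W`. Taking the Wronskian with `g` kills `g`, so it lowers the dimension of `W`, while it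
lowers orders of vanishing at `a` by at most one; and if `g` does not vanish at `a`, it kills no
nonzero polynomial that does. As `S / I` is artinian, only finitely many degrees matter, so a single
`a` serves for all of them.
-/

open scoped Polynomial

namespace StrongLefschetz

section Wronskian

variable {R : Type*} [CommRing R]

theorem pow_dvd_wronskian {p f : R[X]} {n : ℕ} (h : p ^ (n + 1) ∣ f) (g : R[X]) :
    p ^ n ∣ Polynomial.wronskian g f :=
  dvd_sub ((Polynomial.pow_sub_one_dvd_derivative_of_pow_dvd h).mul_left g)
    (((pow_dvd_pow p n.le_succ).trans h).mul_left _)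

theorem eq_zero_of_wronskian_eq_zero [IsDomain R] [CharZero R] {f g : R[X]} {a : R}
    (hf : f.IsRoot a) (hg : ¬ g.IsRoot a) (h : Polynomial.wronskian g f = 0) : f = 0 := by
  by_contra hf0
  have hg0 : g ≠ 0 := by
    rintro rfl
    exact hg Polynomial.eval_zero
  have hf'0 : f.derivative ≠ 0 := fun hf' ↦ by
    rw [Polynomial.eq_C_of_derivative_eq_zero hf', Polynomial.IsRoot, Polynomial.eval_C] at hf
    exact hf0 (by rw [Polynomial.eq_C_of_derivative_eq_zero hf', hf, map_zero])
  have heq : g * f.derivative = g.derivative * f := sub_eq_zero.mp h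
  have hmul0 : g * f.derivative ≠ 0 := mul_ne_zero hg0 hf'0
  have horder : f.derivative.rootMultiplicity a =
      g.derivative.rootMultiplicity a + f.rootMultiplicity a := by
    rw [← Polynomial.rootMultiplicity_mul (heq ▸ hmul0), ← heq,
      Polynomial.rootMultiplicity_mul hmul0, Polynomial.rootMultiplicity_eq_zero hg, zero_add]
  have hpos : 0 < f.rootMultiplicity a := (Polynomial.rootMultiplicity_pos hf0).mpr hf
  rw [Polynomial.derivative_rootMultiplicity_of_root hf] at horder
  omega

end Wronskian

section OrdinaryPoint

variable {K : Type*} [Field K]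

theorem finrank_map_lt {V V' : Type*} [AddCommGroup V] [Module K V] [AddCommGroup V'] [Module K V']
    {W : Submodule K V} [FiniteDimensional K W] {φ : V →ₗ[K] V'} {v : V} (hvW : v ∈ W)
    (hv : v ≠ 0) (hφ : φ v = 0) : Module.finrank K (W.map φ) < Module.finrank K W := by
  contrapose! hv
  exact Submodule.disjoint_def.mp (Submodule.disjoint_ker_of_finrank_le φ hv) v hvW hφ

theorem finrank_map_wronskian_lt {W : Submodule K K[X]} [FiniteDimensional K W] {g : K[X]}
    (hgW : g ∈ W) (hg : g ≠ 0) :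
    Module.finrank K (W.map (Polynomial.wronskianBilin K g)) < Module.finrank K W :=
  finrank_map_lt (φ := Polynomial.wronskianBilin K g) hgW hg (Polynomial.wronskian_self_eq_zero g)

/-- `a` is an ordinary (that is, not a Weierstrass) point of the linear series `W`: no nonzero
element of `W` vanishes at `a` to order `dim W`. Meant for finite-dimensional `W`; for an
infinite-dimensional one `finrank` is `0` and no point is ordinary. -/
def IsOrdinaryPoint (W : Submodule K K[X]) (a : K) : Prop :=
  ∀ f ∈ W, (Polynomial.X - Polynomial.C a) ^ Module.finrank K W ∣ f → f = 0

theorem IsOrdinaryPoint.of_map_wronskian [CharZero K] {W : Submodule K K[X]}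
    [FiniteDimensional K W] {g : K[X]} {a : K} (hgW : g ∈ W) (hga : ¬ g.IsRoot a)
    (h : IsOrdinaryPoint (W.map (Polynomial.wronskianBilin K g)) a) : IsOrdinaryPoint W a := by
  intro f hfW hdvd
  have hg0 : g ≠ 0 := by
    rintro rfl
    exact hga Polynomial.eval_zero
  have hlt := finrank_map_wronskian_lt hgW hg0
  have hfa : f.IsRoot a :=
    Polynomial.dvd_iff_isRoot.mp ((dvd_pow_self _ (Nat.ne_zero_of_lt hlt)).trans hdvd)
  refine eq_zero_of_wronskian_eq_zero hfa hga (h _ (Submodule.mem_map_of_mem hfW) ?_)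
  exact pow_dvd_wronskian ((pow_dvd_pow _ hlt).trans hdvd) g

theorem finite_setOfPred_not_isOrdinaryPoint [CharZero K] (W : Submodule K K[X])
    [FiniteDimensional K W] : {a | ¬ IsOrdinaryPoint W a}.Finite := by
  induction hc : Module.finrank K W using Nat.strong_induction_on generalizing W with
  | _ c ih =>
    obtain rfl | hW := eq_or_ne W ⊥
    · simp [IsOrdinaryPoint]
    obtain ⟨g, hgW, hg0⟩ := W.ne_bot_iff.mp hW
    have hlt := finrank_map_wronskian_lt hgW hg0
    refine ((ih _ (hc ▸ hlt) (W.map (Polynomial.wronskianBilin K g)) rfl).union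
      (Polynomial.finite_setOfPred_isRoot hg0)).subset fun a ha ↦ ?_
    by_contra hgood
    simp only [Set.mem_union, Set.mem_ofPred_eq, not_or, not_not] at hgood
    exact ha (.of_map_wronskian hgW hgood.2 hgood.1)

theorem exists_mem_dvd_sub {W : Submodule K K[X]} {q : K[X]} (hq : q ≠ 0)
    (hdim : Module.finrank K W = q.natDegree) (hW : ∀ f ∈ W, q ∣ f → f = 0) (p : K[X]) :
    ∃ w ∈ W, q ∣ p - w := by
  let φ : W →ₗ[K] K[X] ⧸ Ideal.span {q} :=
    (Ideal.Quotient.mkₐ K (Ideal.span {q})).toLinearMap.domRestrict W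
  have : FiniteDimensional K (K[X] ⧸ Ideal.span {q}) := (AdjoinRoot.powerBasis hq).finite
  have hinj : Function.Injective φ := by
    refine (injective_iff_map_eq_zero φ).mpr fun w hw ↦ Subtype.ext (hW w w.2 ?_)
    exact Ideal.Quotient.eq_zero_iff_dvd _ _ |>.mp hw
  have : FiniteDimensional K W := .of_injective φ hinj
  have hsurj : Function.Surjective φ :=
    (LinearMap.injective_iff_surjective_of_finrank_eq_finrank
      (hdim.trans finrank_quotient_span_eq_natDegree.symm)).mp hinj
  obtain ⟨w, hw⟩ := hsurj (Ideal.Quotient.mk _ p)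
  exact ⟨w, w.2, Ideal.mem_span_singleton.mp (Ideal.Quotient.eq.mp hw.symm)⟩

end OrdinaryPoint

section Dehomogenization

/-- Setting `y = 1` in a polynomial in `x` and `y`, inverse to `Polynomial.homogenize · n` between
forms of degree `n` and polynomials of degree at most `n`. -/
noncomputable abbrev dehomogenize {R : Type*} [CommSemiring R] :
    MvPolynomial (Fin 2) R →ₐ[R] R[X] :=
  aeval ![Polynomial.X, 1]

theorem natDegree_dehomogenize_le {R : Type*} [CommSemiring R] {F : MvPolynomial (Fin 2) R} {d : ℕ}
    (hF : F.IsHomogeneous d) : (dehomogenize F).natDegree ≤ d := by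
  simpa using aeval_natDegree_le (n := 1) F hF.totalDegree_le ![Polynomial.X, 1]
    (by simp [Fin.forall_fin_two, Polynomial.natDegree_X_le])

theorem eq_zero_of_dehomogenize_eq_zero {R : Type*} [CommSemiring R] {F : MvPolynomial (Fin 2) R}
    {d : ℕ} (hF : F.IsHomogeneous d) (h : dehomogenize F = 0) : F = 0 := by
  rw [← Polynomial.homogenize_eq_of_isHomogeneous hF h, Polynomial.homogenize_zero]

variable {R : Type*} [CommRing R]

/-- The linear form `x - a y`, which dehomogenizes to `X - a`. -/
noncomputable def linearForm (a : R) : MvPolynomial (Fin 2) R :=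
  X 0 - C a * X 1

theorem isHomogeneous_linearForm (a : R) : (linearForm a).IsHomogeneous 1 :=
  (isHomogeneous_X R 0).sub (isHomogeneous_C_mul_X a 1)

theorem isHomogeneous_linearForm_pow_mul (a : R) (k : ℕ) {n : ℕ} {F : MvPolynomial (Fin 2) R}
    (hF : F.IsHomogeneous n) : (linearForm a ^ k * F).IsHomogeneous (n + k) := by
  simpa [add_comm] using ((isHomogeneous_linearForm a).pow k).mul hF

theorem dehomogenize_linearForm_pow_mul (a : R) (k : ℕ) (F : MvPolynomial (Fin 2) R) :
    dehomogenize (linearForm a ^ k * F) = (Polynomial.X - Polynomial.C a) ^ k * dehomogenize F := by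
  simp [linearForm]

theorem exists_eq_linearForm_pow_mul {F : MvPolynomial (Fin 2) R} {n k : ℕ} {a : R}
    (hF : F.IsHomogeneous (n + k))
    (hdvd : (Polynomial.X - Polynomial.C a) ^ k ∣ dehomogenize F) :
    ∃ G : MvPolynomial (Fin 2) R, G.IsHomogeneous n ∧ F = linearForm a ^ k * G := by
  obtain _ | _ := subsingleton_or_nontrivial R
  · exact ⟨0, isHomogeneous_zero .., Subsingleton.elim _ _⟩
  obtain ⟨q, hq⟩ := hdvd
  have hqdeg : q.natDegree ≤ n := by
    obtain rfl | hq0 := eq_or_ne q 0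
    · simp
    have hdeg := natDegree_dehomogenize_le hF
    rw [hq, ((Polynomial.monic_X_sub_C a).pow k).natDegree_mul' hq0,
      (Polynomial.monic_X_sub_C a).natDegree_pow, Polynomial.natDegree_X_sub_C] at hdeg
    omega
  have hG := Polynomial.isHomogeneous_homogenize (n := n) q
  refine ⟨q.homogenize n, hG, sub_eq_zero.mp ?_⟩
  refine eq_zero_of_dehomogenize_eq_zero (hF.sub (isHomogeneous_linearForm_pow_mul a k hG)) ?_
  rw [map_sub, dehomogenize_linearForm_pow_mul, Polynomial.aeval_homogenize_X_one q hqdeg, hq,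
    sub_self]

end Dehomogenization

section DehomogenizedPart

variable {K : Type*} [Field K] {I : Ideal (MvPolynomial (Fin 2) K)}

/-- The space of polynomials obtained from the forms of degree `d` in `I` by setting `y = 1`. -/
noncomputable def dehomogenizedPart (I : Ideal (MvPolynomial (Fin 2) K)) (d : ℕ) :
    Submodule K K[X] :=
  (homogeneousSubmodule (Fin 2) K d ⊓ I.restrictScalars K).map dehomogenize.toLinearMap

theorem dehomogenize_mem_dehomogenizedPart {d : ℕ} {F : MvPolynomial (Fin 2) K}
    (hF : F.IsHomogeneous d) (hFI : F ∈ I) : dehomogenize F ∈ dehomogenizedPart I d :=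
  ⟨F, ⟨hF, hFI⟩, rfl⟩

instance (I : Ideal (MvPolynomial (Fin 2) K)) (d : ℕ) :
    FiniteDimensional K (dehomogenizedPart I d) := by
  have hle : dehomogenizedPart I d ≤ Polynomial.degreeLE K d := by
    rintro _ ⟨F, ⟨hF, -⟩, rfl⟩
    exact Polynomial.mem_degreeLE.mpr
      (Polynomial.natDegree_le_iff_degree_le.mp (natDegree_dehomogenize_le hF))
  have : FiniteDimensional K (Polynomial.degreeLE K d) := by
    rw [← Polynomial.degreeLT_succ_eq_degreeLE]
    exact (Polynomial.degreeLTEquiv K (d + 1)).symm.finiteDimensional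
  exact Submodule.finiteDimensional_of_le hle

theorem eq_zero_of_linearForm_pow_mul_mem {n k : ℕ} {a : K}
    (ha : IsOrdinaryPoint (dehomogenizedPart I (n + k)) a)
    (hk : Module.finrank K (dehomogenizedPart I (n + k)) ≤ k) {F : MvPolynomial (Fin 2) K}
    (hF : F.IsHomogeneous n) (hmem : linearForm a ^ k * F ∈ I) : F = 0 := by
  have hmul : (Polynomial.X - Polynomial.C a) ^ k * dehomogenize F = 0 := by
    refine ha _ ?_ ((pow_dvd_pow _ hk).mul_right _)
    rw [← dehomogenize_linearForm_pow_mul]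
    exact dehomogenize_mem_dehomogenizedPart (isHomogeneous_linearForm_pow_mul a k hF) hmem
  exact eq_zero_of_dehomogenize_eq_zero hF
    ((mul_eq_zero.mp hmul).resolve_left (pow_ne_zero _ (Polynomial.X_sub_C_ne_zero a)))

theorem exists_sub_linearForm_pow_mul_mem {n k : ℕ} {a : K}
    (ha : IsOrdinaryPoint (dehomogenizedPart I (n + k)) a)
    (hk : k ≤ Module.finrank K (dehomogenizedPart I (n + k))) {G : MvPolynomial (Fin 2) K}
    (hG : G.IsHomogeneous (n + k)) :
    ∃ F : MvPolynomial (Fin 2) K, F.IsHomogeneous n ∧ G - linearForm a ^ k * F ∈ I := by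
  obtain ⟨_, ⟨H, ⟨hH, hHI⟩, rfl⟩, hdvd⟩ :=
    exists_mem_dvd_sub (pow_ne_zero _ (Polynomial.X_sub_C_ne_zero a))
      (by simp) ha (dehomogenize G)
  obtain ⟨F, hF, hGH⟩ := exists_eq_linearForm_pow_mul (F := G - H) (hG.sub hH)
    (map_sub (dehomogenize (R := K)) G H ▸ (pow_dvd_pow _ hk).trans hdvd)
  exact ⟨F, hF, by rwa [← hGH, sub_sub_cancel]⟩

theorem exists_forall_lt_isOrdinaryPoint [CharZero K] (I : Ideal (MvPolynomial (Fin 2) K))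
    (N : ℕ) : ∃ a : K, ∀ d < N, IsOrdinaryPoint (dehomogenizedPart I d) a := by
  have hfin := (Set.finite_lt_nat N).biUnion fun d _ ↦
    finite_setOfPred_not_isOrdinaryPoint (dehomogenizedPart I d)
  obtain ⟨a, ha⟩ := hfin.exists_notMem
  exact ⟨a, by simpa using ha⟩

end DehomogenizedPart

section GradedPiece

variable {K : Type*} [Field K] {m : ℕ} {I : Ideal (MvPolynomial (Fin m) K)}

theorem gradedPiece_of_neg {j : ℤ} (hj : j < 0) : gradedPiece I j = ⊥ :=
  if_neg hj.not_ge

theorem gradedPiece_natCast (n : ℕ) : gradedPiece I n =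
    (homogeneousSubmodule (Fin m) K n).map (Ideal.Quotient.mkₐ K I).toLinearMap :=
  if_pos n.cast_nonneg

theorem maxRankOn_of_forall_mul_mem {P : MvPolynomial (Fin m) K} {n : ℕ}
    (h : ∀ F : MvPolynomial (Fin m) K, F.IsHomogeneous n → P * F ∈ I → F ∈ I)
    (B : Submodule K (MvPolynomial (Fin m) K ⧸ I)) :
    MaxRankOn (LinearMap.mulLeft K (Ideal.Quotient.mk I P)) (gradedPiece I n) B := by
  left
  rw [gradedPiece_natCast]
  rintro _ ⟨F, hF, rfl⟩ hmul
  rw [LinearMap.mulLeft_apply] at hmul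
  exact Ideal.Quotient.eq_zero_iff_mem.mpr (h F hF (Ideal.Quotient.eq_zero_iff_mem.mp hmul))

theorem maxRankOn_of_forall_exists_sub_mul_mem {P : MvPolynomial (Fin m) K} {n d : ℕ}
    (h : ∀ G : MvPolynomial (Fin m) K, G.IsHomogeneous d →
      ∃ F : MvPolynomial (Fin m) K, F.IsHomogeneous n ∧ G - P * F ∈ I) :
    MaxRankOn (LinearMap.mulLeft K (Ideal.Quotient.mk I P))
      (gradedPiece I n) (gradedPiece I d) := by
  right
  rw [gradedPiece_natCast, gradedPiece_natCast]
  rintro _ ⟨G, hG, rfl⟩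
  obtain ⟨F, hF, hGF⟩ := h G hG
  exact ⟨_, ⟨F, hF, rfl⟩, (Ideal.Quotient.eq.mpr hGF).symm⟩

theorem maxRankOn_of_isOrdinaryPoint {I : Ideal (MvPolynomial (Fin 2) K)} {n k : ℕ} {a : K}
    (ha : IsOrdinaryPoint (dehomogenizedPart I (n + k)) a) :
    MaxRankOn (LinearMap.mulLeft K (Ideal.Quotient.mk I (linearForm a) ^ k))
      (gradedPiece I n) (gradedPiece I (n + k : ℕ)) := by
  rw [← map_pow]
  obtain hk | hk := le_total (Module.finrank K (dehomogenizedPart I (n + k))) k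
  · refine maxRankOn_of_forall_mul_mem (fun F hF hmem ↦ ?_) _
    rw [eq_zero_of_linearForm_pow_mul_mem ha hk hF hmem]
    exact I.zero_mem
  · exact maxRankOn_of_forall_exists_sub_mul_mem fun G hG ↦
      exists_sub_linearForm_pow_mul_mem ha hk hG

end GradedPiece

section Artinian

attribute [local instance] MvPolynomial.gradedAlgebra

theorem mem_radical_of_isHomogeneous {σ R : Type*} [CommRing R] {I : Ideal (MvPolynomial σ R)}
    [Algebra.IsIntegral R (MvPolynomial σ R ⧸ I)]
    (hI : I.IsHomogeneous (homogeneousSubmodule σ R)) {F : MvPolynomial σ R} {d : ℕ} (hd : d ≠ 0)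
    (hF : F.IsHomogeneous d) : F ∈ I.radical := by
  obtain ⟨p, hp, hroot⟩ := Algebra.IsIntegral.isIntegral (R := R) (Ideal.Quotient.mk I F)
  refine ⟨p.natDegree, ?_⟩
  have hmem : Polynomial.aeval F p ∈ I := by
    rw [← Ideal.Quotient.eq_zero_iff_mem, ← hroot]
    exact (Polynomial.aeval_algHom_apply (Ideal.Quotient.mkₐ R I) F p).symm
  have htop : homogeneousComponent (d * p.natDegree) (Polynomial.aeval F p) = F ^ p.natDegree := by
    rw [Polynomial.aeval_eq_sum_range, map_sum, Finset.sum_eq_single p.natDegree]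
    · rw [map_smul, homogeneousComponent_eq_self (hF.pow _), hp.coeff_natDegree, one_smul]
    · intro i _ hi
      rw [map_smul, homogeneousComponent_of_mem (hF.pow i),
        if_neg fun h ↦ hi (Nat.eq_of_mul_eq_mul_left hd.bot_lt h).symm, smul_zero]
    · simp
  exact htop ▸ homogeneousComponent_mem_of_mem hI hmem _

theorem exists_pow_idealOfVars_le {σ R : Type*} [Finite σ] [CommRing R]
    {I : Ideal (MvPolynomial σ R)} [Algebra.IsIntegral R (MvPolynomial σ R ⧸ I)]
    (hI : I.IsHomogeneous (homogeneousSubmodule σ R)) : ∃ N : ℕ, idealOfVars σ R ^ N ≤ I := by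
  refine Ideal.exists_pow_le_of_le_radical_of_fg ?_ (idealOfVars_fg σ R)
  rw [Ideal.span_le]
  rintro _ ⟨i, rfl⟩
  exact mem_radical_of_isHomogeneous hI one_ne_zero (isHomogeneous_X R i)

theorem exists_forall_ge_gradedPiece_span_eq_bot {K : Type*} [Field K] {m : ℕ}
    {G : Set (MvPolynomial (Fin m) K)} (hG : ∀ g ∈ G, ∃ e : ℕ, g.IsHomogeneous e)
    [Algebra.IsIntegral K (MvPolynomial (Fin m) K ⧸ Ideal.span G)] :
    ∃ N : ℕ, ∀ n : ℕ, N ≤ n → gradedPiece (Ideal.span G) n = ⊥ := by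
  obtain ⟨N, hN⟩ := exists_pow_idealOfVars_le (Ideal.homogeneous_span _ G hG)
  refine ⟨N, fun n hn ↦ ?_⟩
  rw [gradedPiece_natCast, Submodule.eq_bot_iff]
  rintro _ ⟨F, hF, rfl⟩
  refine Ideal.Quotient.eq_zero_iff_mem.mpr (hN ((mem_pow_idealOfVars_iff' N F).mpr ?_))
  exact fun s hs ↦ IsHomogeneous.coeff_eq_zero hF (hs.trans_le hn).ne

end Artinian

end StrongLefschetz

open StrongLefschetz

/-- Every artinian homogeneous ideal in `K[x,y]`, `K` a field of
characteristic zero, has the strong Lefschetz property. -/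
theorem every_artinian_ideal_in_two_variables_has_SLP
    (K : Type*) [Field K] [CharZero K]
    (I : Ideal (MvPolynomial (Fin 2) K))
    (hart : Module.Finite K (MvPolynomial (Fin 2) K ⧸ I))
    (hhom : ∃ G : Set (MvPolynomial (Fin 2) K),
      (∀ g ∈ G, ∃ e : ℕ, g.IsHomogeneous e) ∧ I = Ideal.span G) :
    ∃ ℓ : MvPolynomial (Fin 2) K, ℓ.IsHomogeneous 1 ∧
      ∀ (j : ℤ) (k : ℕ),
        MaxRankOn (LinearMap.mulLeft K ((Ideal.Quotient.mk I ℓ) ^ k))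
          (gradedPiece I j) (gradedPiece I (j + k)) := by
  obtain ⟨G, hG, rfl⟩ := hhom
  obtain ⟨N, hN⟩ := exists_forall_ge_gradedPiece_span_eq_bot hG
  obtain ⟨a, ha⟩ := exists_forall_lt_isOrdinaryPoint (Ideal.span G) N
  refine ⟨linearForm a, isHomogeneous_linearForm a, fun j k ↦ ?_⟩
  obtain hj | hj := lt_or_ge j 0
  · left
    simp [gradedPiece_of_neg hj]
  lift j to ℕ using hj with n
  rw [← Nat.cast_add]
  obtain hlt | hge := lt_or_ge (n + k) N
  · exact maxRankOn_of_isOrdinaryPoint (ha _ hlt)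
  · right
    rw [hN _ hge]
    exact bot_le
end

section
/- Let I ⊂ S = K[x_1,…,x_n] be an artinian monomial ideal over a field K of characteristic zero. Then S/I has the weak Lefschetz property if and only if x_1 + x_2 + ⋯ + x_n is a Lefschetz element for S/I, i.e. the multiplication map ×(x_1+⋯+x_n) : (S/I)_j → (S/I)_{j+1} has maximal rank for every integer j. -/
open MvPolynomial

/-!
The diagonal torus acts on `S/I` by graded automorphisms because `I` is monomial, and it moves
`∑ xᵢ` to every linear form all of whose coefficients are nonzero. So it is enough to find one
linear form of the latter kind whose multiplication map has maximal rank in a given degree. If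
`ℓ` has maximal rank there, then so does `ℓ + t ∑ xᵢ` for all but finitely many `t`, and for all
but finitely many `t` it has no zero coefficient.
-/

open Filter

section LinearAlgebra

variable {K V W : Type*} [Field K] [AddCommGroup V] [Module K V] [AddCommGroup W] [Module K W]

lemma eventually_cofinite_isUnit_one_add_smul [FiniteDimensional K V] (N : Module.End K V) :
    ∀ᶠ t : K in cofinite, IsUnit (1 + t • N) := by
  have hspec : (spectrum K N).Finite := Module.End.finite_spectrum N
  refine eventually_cofinite.2 ((hspec.image fun μ ↦ -μ⁻¹).subset fun t ht ↦ ?_)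
  have ht0 : t ≠ 0 := by
    rintro rfl
    simp at ht
  have hfactor : 1 + t • N = -(Units.mk0 t ht0 • (algebraMap K (Module.End K V) (-t⁻¹) - N)) := by
    simp only [Units.smul_mk0, map_neg, smul_sub, smul_neg, Algebra.algebraMap_eq_smul_one,
      smul_smul, mul_inv_cancel₀ ht0, one_smul]
    abel
  refine ⟨-t⁻¹, fun hunit ↦ ht ?_, by simp⟩
  rw [hfactor]
  exact (hunit.smul _).neg

lemma eventually_cofinite_injective_add_smul [FiniteDimensional K V] {f : V →ₗ[K] W}
    (hf : Function.Injective f) (g : V →ₗ[K] W) :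
    ∀ᶠ t : K in cofinite, Function.Injective (f + t • g) := by
  obtain ⟨L, hL⟩ := f.exists_leftInverse_of_injective (LinearMap.ker_eq_bot.2 hf)
  filter_upwards [eventually_cofinite_isUnit_one_add_smul (L ∘ₗ g)] with t ht
  have hcomp : L ∘ₗ (f + t • g) = 1 + t • (L ∘ₗ g) := by
    rw [LinearMap.comp_add, hL, LinearMap.comp_smul, Module.End.one_eq_id]
  refine .of_comp (f := L) ?_
  rw [← LinearMap.coe_comp, hcomp]
  exact ((Module.End.isUnit_iff _).1 ht).injective

lemma eventually_cofinite_surjective_add_smul [FiniteDimensional K W] {f : V →ₗ[K] W}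
    (hf : Function.Surjective f) (g : V →ₗ[K] W) :
    ∀ᶠ t : K in cofinite, Function.Surjective (f + t • g) := by
  obtain ⟨R, hR⟩ := f.exists_rightInverse_of_surjective (LinearMap.range_eq_top.2 hf)
  filter_upwards [eventually_cofinite_isUnit_one_add_smul (g ∘ₗ R)] with t ht
  have hcomp : (f + t • g) ∘ₗ R = 1 + t • (g ∘ₗ R) := by
    rw [LinearMap.add_comp, hR, LinearMap.smul_comp, Module.End.one_eq_id]
  refine .of_comp (g := R) ?_
  rw [← LinearMap.coe_comp, hcomp]
  exact ((Module.End.isUnit_iff _).1 ht).surjective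

end LinearAlgebra

section MaxRankOn

variable {K M : Type*} [Field K] [AddCommGroup M] [Module K M] {A B : Submodule K M}

lemma maxRankOn_iff_injective_or_surjective_restrict {f : M →ₗ[K] M} (hf : ∀ x ∈ A, f x ∈ B) :
    MaxRankOn f A B ↔
      Function.Injective (f.restrict hf) ∨ Function.Surjective (f.restrict hf) := by
  refine or_congr ?_ ?_
  · simp only [injective_iff_map_eq_zero, Subtype.forall, Subtype.ext_iff,
      LinearMap.coe_restrict_apply, ZeroMemClass.coe_zero]
  · simp only [SetLike.le_def, Submodule.mem_map, Function.Surjective, Subtype.forall,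
      Subtype.exists, Subtype.ext_iff, LinearMap.coe_restrict_apply, exists_prop]

lemma MaxRankOn.eventually_cofinite_add_smul [FiniteDimensional K A] [FiniteDimensional K B]
    {f g : M →ₗ[K] M} (h : MaxRankOn f A B) (hf : ∀ x ∈ A, f x ∈ B) (hg : ∀ x ∈ A, g x ∈ B) :
    ∀ᶠ t : K in cofinite, MaxRankOn (f + t • g) A B := by
  have hfg (t : K) : ∀ x ∈ A, (f + t • g) x ∈ B := fun x hx ↦
    B.add_mem (hf x hx) (B.smul_mem t (hg x hx))
  simp only [fun t ↦ maxRankOn_iff_injective_or_surjective_restrict (hfg t)]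
  rcases (maxRankOn_iff_injective_or_surjective_restrict hf).1 h with hinj | hsurj
  · exact (eventually_cofinite_injective_add_smul hinj (g.restrict hg)).mono fun _ ↦ .inl
  · exact (eventually_cofinite_surjective_add_smul hsurj (g.restrict hg)).mono fun _ ↦ .inr

lemma maxRankOn_conj_iff {N : Type*} [AddCommGroup N] [Module K N] (e : M ≃ₗ[K] N)
    (f : M →ₗ[K] M) :
    MaxRankOn (e.conj f) (A.map (e : M →ₗ[K] N)) (B.map (e : M →ₗ[K] N)) ↔ MaxRankOn f A B := by
  have hconj : e.conj f ∘ₗ e = (e : M →ₗ[K] N) ∘ₗ f := by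
    ext x
    simp [LinearEquiv.conj_apply]
  refine or_congr ?_ ?_
  · rw [← e.forall_congr_right]
    simp [LinearEquiv.conj_apply]
  · rw [← Submodule.map_comp, hconj, Submodule.map_comp,
      Submodule.map_le_map_iff_of_injective e.injective]

lemma maxRankOn_mulLeft_map_algEquiv_iff {R S : Type*} [Ring R] [Algebra K R] [Ring S] [Algebra K S]
    (e : R ≃ₐ[K] S) (a : R) {A B : Submodule K R} :
    MaxRankOn (LinearMap.mulLeft K (e a)) (A.map e.toLinearMap) (B.map e.toLinearMap) ↔
      MaxRankOn (LinearMap.mulLeft K a) A B := by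
  have hconj : LinearMap.mulLeft K (e a) = e.toLinearEquiv.conj (LinearMap.mulLeft K a) := by
    ext x
    simp [LinearEquiv.conj_apply]
  rw [hconj]
  exact maxRankOn_conj_iff e.toLinearEquiv _

end MaxRankOn

section ScaleVariables

variable {σ R : Type*} [CommSemiring R]

/-- The action of the diagonal torus on the polynomial ring: the automorphism `xᵢ ↦ cᵢ xᵢ`. It
relates `∑ xᵢ` to the other linear forms with full support. The `cᵢ` are taken as units, rather
than as scalars with a side condition, so that invertibility is built in. -/
noncomputable def scaleVariables (c : σ → Rˣ) : MvPolynomial σ R ≃ₐ[R] MvPolynomial σ R :=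
  AlgEquiv.ofAlgHom (aeval fun i ↦ (c i : R) • X i) (aeval fun i ↦ (↑(c i)⁻¹ : R) • X i)
    (by ext1 i; simp [smul_smul]) (by ext1 i; simp [smul_smul])

lemma scaleVariables_X (c : σ → Rˣ) (i : σ) : scaleVariables c (X i) = (c i : R) • X i :=
  aeval_X _ i

lemma scaleVariables_apply_inv_apply (c : σ → Rˣ) (p : MvPolynomial σ R) :
    scaleVariables c (scaleVariables c⁻¹ p) = p :=
  (scaleVariables c).apply_symm_apply p

lemma scaleVariables_monomial (c : σ → Rˣ) (s : σ →₀ ℕ) (a : R) :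
    scaleVariables c (monomial s a) = C (s.prod fun i k ↦ (c i : R) ^ k) * monomial s a := by
  change aeval _ (monomial s a) = _
  rw [aeval_monomial, monomial_eq]
  simp only [algebraMap_eq, smul_eq_C_mul, mul_pow, Finsupp.prod_mul, map_finsuppProd, map_pow]
  ring

lemma isHomogeneous_scaleVariables (c : σ → Rˣ) {p : MvPolynomial σ R} {m : ℕ}
    (hp : p.IsHomogeneous m) : (scaleVariables c p).IsHomogeneous m := by
  have hX (i : σ) : ((c i : R) • X i : MvPolynomial σ R).IsHomogeneous 1 :=
    (homogeneousSubmodule σ R 1).smul_mem _ (isHomogeneous_X R i)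
  exact one_mul m ▸ hp.aeval _ hX

lemma map_scaleVariables_homogeneousSubmodule (c : σ → Rˣ) (m : ℕ) :
    (homogeneousSubmodule σ R m).map (scaleVariables c).toLinearMap =
      homogeneousSubmodule σ R m := by
  refine le_antisymm ?_ fun p hp ↦
    ⟨scaleVariables c⁻¹ p, isHomogeneous_scaleVariables c⁻¹ hp, scaleVariables_apply_inv_apply c p⟩
  rintro _ ⟨p, hp, rfl⟩
  exact isHomogeneous_scaleVariables c hp

lemma scaleVariables_mem_span_monomial (c : σ → Rˣ) {G : Set (σ →₀ ℕ)} {p : MvPolynomial σ R}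
    (hp : p ∈ Ideal.span ((fun s ↦ monomial s (1 : R)) '' G)) :
    scaleVariables c p ∈ Ideal.span ((fun s ↦ monomial s (1 : R)) '' G) := by
  suffices h : Ideal.span ((fun s ↦ monomial s (1 : R)) '' G) ≤
      (Ideal.span ((fun s ↦ monomial s (1 : R)) '' G)).comap (scaleVariables c) from h hp
  rw [Ideal.span_le]
  rintro _ ⟨s, hs, rfl⟩
  rw [SetLike.mem_coe, Ideal.mem_comap, scaleVariables_monomial]
  exact Ideal.mul_mem_left _ _ (Ideal.subset_span ⟨s, hs, rfl⟩)

lemma map_scaleVariables_span_monomial (c : σ → Rˣ) (G : Set (σ →₀ ℕ)) :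
    (Ideal.span ((fun s ↦ monomial s (1 : R)) '' G)).map
        (scaleVariables c : MvPolynomial σ R →+* MvPolynomial σ R) =
      Ideal.span ((fun s ↦ monomial s (1 : R)) '' G) := by
  refine le_antisymm (Ideal.map_le_iff_le_comap.2 fun _ ↦ scaleVariables_mem_span_monomial c)
    fun p hp ↦ ?_
  rw [← scaleVariables_apply_inv_apply c p]
  exact Ideal.mem_map_of_mem _ (scaleVariables_mem_span_monomial c⁻¹ hp)

end ScaleVariables

lemma isHomogeneous_sum_X (σ R : Type*) [Fintype σ] [CommSemiring R] :
    (∑ i : σ, X i : MvPolynomial σ R).IsHomogeneous 1 :=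
  .sum _ _ _ fun i _ ↦ isHomogeneous_X R i

lemma exists_eq_sum_smul_X_of_isHomogeneous_one {σ R : Type*} [Fintype σ] [CommSemiring R]
    {ℓ : MvPolynomial σ R} (hℓ : ℓ.IsHomogeneous 1) : ∃ a : σ → R, ℓ = ∑ i, a i • X i := by
  rw [← mem_homogeneousSubmodule, homogeneousSubmodule_one_eq_span_X,
    Submodule.mem_span_range_iff_exists_fun] at hℓ
  exact hℓ.imp fun _ ↦ Eq.symm

lemma mulLeft_mk_add_smul {R A : Type*} [CommRing R] [CommRing A] [Algebra R A] (I : Ideal A)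
    (a b : A) (t : R) :
    LinearMap.mulLeft R (Ideal.Quotient.mk I (a + t • b)) =
      LinearMap.mulLeft R (Ideal.Quotient.mk I a) +
        t • LinearMap.mulLeft R (Ideal.Quotient.mk I b) := by
  have hmk : Ideal.Quotient.mk I (a + t • b) =
      Ideal.Quotient.mk I a + t • Ideal.Quotient.mk I b := rfl
  refine LinearMap.ext fun x ↦ ?_
  simp only [hmk, LinearMap.mulLeft_apply, LinearMap.add_apply, LinearMap.smul_apply, add_mul,
    smul_mul_assoc]

section GradedPiece

variable {K : Type*} [Field K] {n : ℕ} {I : Ideal (MvPolynomial (Fin n) K)}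

instance finiteDimensional_gradedPiece (j : ℤ) : FiniteDimensional K (gradedPiece I j) := by
  refine .of_fg ?_
  rw [gradedPiece]
  split_ifs
  · exact (homogeneousSubmodule_fg (Fin n) K j.toNat).map _
  · exact Submodule.fg_bot

lemma mulLeft_mem_gradedPiece {q : MvPolynomial (Fin n) K} {d : ℕ} (hq : q.IsHomogeneous d)
    (j : ℤ) :
    ∀ x ∈ gradedPiece I j,
      LinearMap.mulLeft K (Ideal.Quotient.mk I q) x ∈ gradedPiece I (j + d) := by
  intro x hx
  rcases le_or_gt 0 j with hj | hj
  · rw [gradedPiece, if_pos hj] at hx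
    obtain ⟨p, hp, rfl⟩ := hx
    have hdeg : (j + d).toNat = d + j.toNat := by lia
    rw [gradedPiece, if_pos (by lia), hdeg]
    exact ⟨q * p, hq.mul hp, map_mul (Ideal.Quotient.mk I) q p⟩
  · rw [gradedPiece, if_neg hj.not_ge, Submodule.mem_bot] at hx
    rw [hx, map_zero]
    exact zero_mem _

lemma map_quotientEquivAlg_scaleVariables_gradedPiece (c : Fin n → Kˣ)
    (hI : I = I.map (scaleVariables c : MvPolynomial (Fin n) K →+* MvPolynomial (Fin n) K))
    (j : ℤ) :
    (gradedPiece I j).map (Ideal.quotientEquivAlg I I (scaleVariables c) hI).toLinearMap =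
      gradedPiece I j := by
  have hcomm : (Ideal.quotientEquivAlg I I (scaleVariables c) hI).toLinearMap ∘ₗ
      (Ideal.Quotient.mkₐ K I).toLinearMap =
        (Ideal.Quotient.mkₐ K I).toLinearMap ∘ₗ (scaleVariables c).toLinearMap := rfl
  unfold gradedPiece
  split_ifs
  · rw [← Submodule.map_comp, hcomm, Submodule.map_comp, map_scaleVariables_homogeneousSubmodule]
  · exact Submodule.map_bot _

lemma maxRankOn_mulLeft_sum_smul_X_iff (c : Fin n → Kˣ)
    (hI : I = I.map (scaleVariables c : MvPolynomial (Fin n) K →+* MvPolynomial (Fin n) K))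
    (j k : ℤ) :
    MaxRankOn (LinearMap.mulLeft K (Ideal.Quotient.mk I (∑ i, (c i : K) • X i)))
        (gradedPiece I j) (gradedPiece I k) ↔
      MaxRankOn (LinearMap.mulLeft K (Ideal.Quotient.mk I (∑ i, X i)))
        (gradedPiece I j) (gradedPiece I k) := by
  have hsum : Ideal.quotientEquivAlg I I (scaleVariables c) hI (Ideal.Quotient.mk I (∑ i, X i)) =
      Ideal.Quotient.mk I (∑ i, (c i : K) • X i) := by
    change Ideal.Quotient.mk I (scaleVariables c (∑ i, X i)) = _
    simp only [map_sum, scaleVariables_X]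
  rw [← maxRankOn_mulLeft_map_algEquiv_iff (Ideal.quotientEquivAlg I I (scaleVariables c) hI)
    (Ideal.Quotient.mk I (∑ i, X i)), hsum, map_quotientEquivAlg_scaleVariables_gradedPiece,
    map_quotientEquivAlg_scaleVariables_gradedPiece]

lemma exists_units_maxRankOn_mulLeft_sum_smul_X [Infinite K] {ℓ : MvPolynomial (Fin n) K}
    (hℓ : ℓ.IsHomogeneous 1) {j : ℤ}
    (h : MaxRankOn (LinearMap.mulLeft K (Ideal.Quotient.mk I ℓ))
      (gradedPiece I j) (gradedPiece I (j + 1))) :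
    ∃ c : Fin n → Kˣ, MaxRankOn
      (LinearMap.mulLeft K (Ideal.Quotient.mk I (∑ i, (c i : K) • X i)))
      (gradedPiece I j) (gradedPiece I (j + 1)) := by
  obtain ⟨a, ha⟩ := exists_eq_sum_smul_X_of_isHomogeneous_one hℓ
  have hrank := h.eventually_cofinite_add_smul (mulLeft_mem_gradedPiece hℓ j)
    (mulLeft_mem_gradedPiece (isHomogeneous_sum_X (Fin n) K) j)
  have hcoeff : ∀ᶠ t : K in cofinite, ∀ i, a i + t ≠ 0 := eventually_all.2 fun i ↦
    (eventually_cofinite_ne (-a i)).mono fun t ht h0 ↦ ht (eq_neg_of_add_eq_zero_right h0)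
  obtain ⟨t, ht, hne⟩ := (hrank.and hcoeff).exists
  refine ⟨fun i ↦ Units.mk0 (a i + t) (hne i), ?_⟩
  have hform : ∑ i, (a i + t) • (X i : MvPolynomial (Fin n) K) = ℓ + t • ∑ i, X i := by
    simp only [ha, add_smul, Finset.sum_add_distrib, Finset.smul_sum]
  simpa only [Units.val_mk0, hform, mulLeft_mk_add_smul] using ht

end GradedPiece

theorem monomial_WLP_iff_sum_of_variables_is_Lefschetz_general
    {K : Type*} [Field K] [Infinite K] {n : ℕ} {I : Ideal (MvPolynomial (Fin n) K)}
    (hmon : ∃ G : Set (Fin n →₀ ℕ),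
      I = Ideal.span ((fun s ↦ monomial s (1 : K)) '' G)) (j : ℤ) :
    (∃ ℓ : MvPolynomial (Fin n) K, ℓ.IsHomogeneous 1 ∧
        MaxRankOn (LinearMap.mulLeft K (Ideal.Quotient.mk I ℓ))
          (gradedPiece I j) (gradedPiece I (j + 1)))
      ↔
    MaxRankOn (LinearMap.mulLeft K (Ideal.Quotient.mk I (∑ i : Fin n, X i)))
      (gradedPiece I j) (gradedPiece I (j + 1)) := by
  refine ⟨?_, fun h ↦ ⟨_, isHomogeneous_sum_X (Fin n) K, h⟩⟩
  rintro ⟨ℓ, hℓ, h⟩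
  obtain ⟨G, rfl⟩ := hmon
  obtain ⟨c, hc⟩ := exists_units_maxRankOn_mulLeft_sum_smul_X hℓ h
  have hinv := (map_scaleVariables_span_monomial c G).symm
  exact (maxRankOn_mulLeft_sum_smul_X_iff c hinv j (j + 1)).1 hc

/-- For an artinian monomial ideal `I ⊆ K[x_1,…,x_n]` over a field of
characteristic zero, `S/I` has the weak Lefschetz property if and only if
`x_1 + ⋯ + x_n` is a Lefschetz element. -/
theorem monomial_WLP_iff_sum_of_variables_is_Lefschetz
    (K : Type*) [Field K] [CharZero K] (n : ℕ)
    (I : Ideal (MvPolynomial (Fin n) K))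
    (hart : Module.Finite K (MvPolynomial (Fin n) K ⧸ I))
    (hmon : ∃ G : Set (Fin n →₀ ℕ),
      I = Ideal.span ((fun s => (monomial s (1 : K))) '' G)) :
    (∃ ℓ : MvPolynomial (Fin n) K, ℓ.IsHomogeneous 1 ∧
        ∀ j : ℤ, MaxRankOn (LinearMap.mulLeft K (Ideal.Quotient.mk I ℓ))
          (gradedPiece I j) (gradedPiece I (j + 1)))
      ↔
    (∀ j : ℤ, MaxRankOn (LinearMap.mulLeft K (Ideal.Quotient.mk I (∑ i : Fin n, X i)))
          (gradedPiece I j) (gradedPiece I (j + 1))) := by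
  have hdeg := monomial_WLP_iff_sum_of_variables_is_Lefschetz_general hmon
  exact ⟨fun ⟨ℓ, hℓ, h⟩ j ↦ (hdeg j).1 ⟨ℓ, hℓ, h j⟩, fun h ↦ ⟨_, isHomogeneous_sum_X (Fin n) K, h⟩⟩
end

section
/- For all integers n, m, k with m ≥ 1 and 0 ≤ k ≤ n, the m×m Toeplitz matrix T_{n,m,k} whose (i,j)-th entry is the binomial coefficient C(n, k+j−i) (with the convention C(n,t) = 0 for t < 0 and t > n), viewed over a field of characteristic zero (e.g. over ℚ), is invertible. -/
/-!
A left null vector of the matrix is the coefficient vector of a polynomial `q` of degree less than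
`m` such that `(X + 1) ^ n * q` has no terms of degree `k, …, k + m - 1`. The degree of this product
is less than `n + m`, so it has at most `n` terms. In characteristic zero, however, a nonzero
polynomial with a nonzero root of multiplicity `n` has more than `n` terms: the operator
`X d/dX - a`, for an exponent `a` of the polynomial, removes exactly one term and lowers the
multiplicity of the root by at most one.
-/

open Polynomial
open scoped Matrix

section EulerOperator

variable {R : Type*} [CommRing R]

/-- The shifted Euler operator `X d/dX - a` on polynomials. It multiplies `X ^ i` by `i - a`, which
makes it possible to delete a single chosen term of a polynomial. -/
noncomputable def eulerSub (a : R) (p : R[X]) : R[X] :=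
  X * derivative p - C a * p

theorem coeff_eulerSub (a : R) (p : R[X]) (i : ℕ) :
    (eulerSub a p).coeff i = (i - a) * p.coeff i := by
  rw [eulerSub, coeff_sub, coeff_C_mul]
  cases i with
  | zero => simp
  | succ i =>
    rw [coeff_X_mul, coeff_derivative]
    push_cast
    ring

theorem support_eulerSub_natCast [NoZeroDivisors R] [CharZero R] (a : ℕ) (p : R[X]) :
    (eulerSub (a : R) p).support = p.support.erase a := by
  ext i
  simp [coeff_eulerSub, sub_eq_zero]

theorem pow_dvd_eulerSub_of_pow_succ_dvd {p q : R[X]} {n : ℕ} (h : q ^ (n + 1) ∣ p) (a : R) :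
    q ^ n ∣ eulerSub a p :=
  dvd_sub ((pow_sub_one_dvd_derivative_of_pow_dvd h).mul_left X)
    (((pow_dvd_pow q n.le_succ).trans h).mul_left (C a))

end EulerOperator

theorem one_lt_card_support_of_isRoot {R : Type*} [Semiring R] [NoZeroDivisors R] {p : R[X]}
    {r : R} (hp : p ≠ 0) (hr : r ≠ 0) (h : p.IsRoot r) : 1 < p.support.card := by
  have card_pos : 0 < p.support.card := Finset.card_pos.mpr (nonempty_support_iff.mpr hp)
  refine lt_of_le_of_ne card_pos fun card_eq_one => ?_
  obtain ⟨i, c, hc, rfl⟩ := card_support_eq_one.mp card_eq_one.symm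
  have : Nontrivial R := nontrivial_of_ne r 0 hr
  have eval_eq_zero : c * r ^ i = 0 := by simpa [IsRoot.def] using h
  exact mul_ne_zero hc (pow_ne_zero i hr) eval_eq_zero

theorem lt_card_support_of_X_sub_C_pow_dvd {R : Type*} [CommRing R] [NoZeroDivisors R]
    [CharZero R] {p : R[X]} {r : R} {n : ℕ} (hp : p ≠ 0) (hr : r ≠ 0) (h : (X - C r) ^ n ∣ p) :
    n < p.support.card := by
  induction n generalizing p with
  | zero => exact Finset.card_pos.mpr (nonempty_support_iff.mpr hp)
  | succ n ih =>
    obtain ⟨a, ha⟩ := nonempty_support_iff.mpr hp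
    have card_eulerSub : (eulerSub (a : R) p).support.card = p.support.card - 1 := by
      rw [support_eulerSub_natCast, Finset.card_erase_of_mem ha]
    have isRoot : p.IsRoot r :=
      dvd_iff_isRoot.mp ((dvd_pow_self _ n.succ_ne_zero).trans h)
    have one_lt_card := one_lt_card_support_of_isRoot hp hr isRoot
    have eulerSub_ne_zero : eulerSub (a : R) p ≠ 0 := by
      rw [← card_support_eq_zero.ne]
      lia
    have := ih eulerSub_ne_zero (pow_dvd_eulerSub_of_pow_succ_dvd h (a : R))
    lia

section Toeplitz

variable {R : Type*}

/-- The `m × m` Toeplitz matrix with `(i, j)` entry the coefficient of `p` of degree `k + j - i`.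
The case distinction sets the coefficients of negative degree to zero, where natural subtraction
would give the constant coefficient. -/
def coeffToeplitz [Semiring R] (p : R[X]) (m k : ℕ) : Matrix (Fin m) (Fin m) R :=
  Matrix.of fun i j => if (i : ℕ) ≤ k + j then p.coeff (k + j - i) else 0

theorem vecMul_coeffToeplitz [CommSemiring R] [DecidableEq R] (p : R[X]) {m : ℕ} (k : ℕ)
    (u : Fin m → R) (j : Fin m) :
    (u ᵥ* coeffToeplitz p m k) j = (p * ofFn m u).coeff (k + j) := by
  simp only [Matrix.vecMul, dotProduct, coeffToeplitz, Matrix.of_apply, ofFn_eq_sum_monomial,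
    Finset.mul_sum, finsetSum_coeff]
  refine Finset.sum_congr rfl fun i _ => ?_
  rw [← C_mul_X_pow_eq_monomial, mul_left_comm, coeff_C_mul, coeff_mul_X_pow']

theorem card_support_le_of_coeff_eq_zero [Semiring R] {p : R[X]} {n m k : ℕ} (hk : k ≤ n)
    (hdeg : p.degree < ↑(n + m)) (hcoeff : ∀ j < m, p.coeff (k + j) = 0) :
    p.support.card ≤ n := by
  have support_subset : p.support ⊆ Finset.range k ∪ Finset.Ico (k + m) (n + m) := by
    intro d hd
    have d_lt : d < n + m := by
      exact_mod_cast (le_degree_of_mem_supp d hd).trans_lt hdeg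
    have not_mem_gap : ¬ (k ≤ d ∧ d < k + m) := fun mem_gap => by
      have coeff_eq_zero := hcoeff (d - k) (by lia)
      rw [Nat.add_sub_cancel' mem_gap.1] at coeff_eq_zero
      exact mem_support_iff.mp hd coeff_eq_zero
    simp only [Finset.mem_union, Finset.mem_range, Finset.mem_Ico]
    lia
  calc
    p.support.card ≤ (Finset.range k ∪ Finset.Ico (k + m) (n + m)).card :=
      Finset.card_le_card support_subset
    _ ≤ (Finset.range k).card + (Finset.Ico (k + m) (n + m)).card := Finset.card_union_le _ _
    _ = n := by
      rw [Finset.card_range, Nat.card_Ico]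
      lia

theorem det_coeffToeplitz_ne_zero [CommRing R] [IsDomain R] {p : R[X]} {k : ℕ} (m : ℕ)
    (hk : k ≤ p.natDegree) (hp : ∀ q ≠ 0, p.natDegree < (p * q).support.card) :
    (coeffToeplitz p m k).det ≠ 0 := by
  classical
  rw [Ne, ← Matrix.exists_vecMul_eq_zero_iff]
  rintro ⟨u, u_ne_zero, vecMul_eq_zero⟩
  have ofFn_ne_zero : ofFn m u ≠ 0 := (map_ne_zero_iff _ (injective_ofFn m)).mpr u_ne_zero
  have degree_lt : (p * ofFn m u).degree < ↑(p.natDegree + m) := by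
    rw [degree_mul, Nat.cast_add]
    calc
      p.degree + (ofFn m u).degree ≤ p.natDegree + (ofFn m u).degree := by
        gcongr
        exact degree_le_natDegree
      _ < p.natDegree + m := WithBot.add_lt_add_left (WithBot.natCast_ne_bot _) (ofFn_degree_lt u)
  refine (hp _ ofFn_ne_zero).not_ge (card_support_le_of_coeff_eq_zero hk degree_lt fun j hj => ?_)
  rw [← vecMul_coeffToeplitz p k u ⟨j, hj⟩, vecMul_eq_zero, Pi.zero_apply]

end Toeplitz

theorem toeplitz_binomial_matrix_is_invertible_general {K : Type*} [Field K] [CharZero K]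
    (n m k : ℕ) (hk : k ≤ n) :
    IsUnit (Matrix.of (fun i j : Fin m =>
      if (i : ℕ) ≤ k + (j : ℕ) then (n.choose (k + (j : ℕ) - (i : ℕ)) : K) else 0)) := by
  have natDegree_eq : ((X + 1 : K[X]) ^ n).natDegree = n := by
    simpa using natDegree_pow_X_add_C n (1 : K)
  have X_add_one_eq : (X + 1 : K[X]) = X - C (-1) := by simp
  have X_add_one_pow_ne_zero : (X + 1 : K[X]) ^ n ≠ 0 := by
    simpa using ((monic_X_add_C (1 : K)).pow n).ne_zero
  have det_ne_zero : (coeffToeplitz ((X + 1 : K[X]) ^ n) m k).det ≠ 0 := by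
    refine det_coeffToeplitz_ne_zero m (hk.trans_eq natDegree_eq.symm) fun q hq => ?_
    rw [natDegree_eq]
    refine lt_card_support_of_X_sub_C_pow_dvd (mul_ne_zero X_add_one_pow_ne_zero hq)
      (neg_ne_zero.mpr (one_ne_zero (α := K))) ?_
    rw [← X_add_one_eq]
    exact dvd_mul_right _ q
  simpa only [coeffToeplitz, coeff_X_add_one_pow] using
    (Matrix.isUnit_iff_isUnit_det _).mpr det_ne_zero.isUnit

/-- For integers `n, m, k` with `m ≥ 1` and `0 ≤ k ≤ n`, the `m × m`
Toeplitz matrix whose `(i,j)`-th entry is the binomial coefficient `C(n, k + j - i)`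
(with the convention that `C(n,t) = 0` for `t < 0` and `t > n`), viewed over `ℚ`,
is invertible. -/
theorem toeplitz_binomial_matrix_is_invertible (n m k : ℕ) (hm : 1 ≤ m) (hk : k ≤ n) :
    IsUnit (Matrix.of (fun i j : Fin m =>
      if (i : ℕ) ≤ k + (j : ℕ) then ((n.choose (k + (j : ℕ) - (i : ℕ)) : ℚ)) else 0)) :=
  toeplitz_binomial_matrix_is_invertible_general n m k hk
end

section
/- Let K be a field of characteristic zero, S = K[x_1,…,x_n], and let M = {m_1,…,m_r} be a set of monomials of degree d in S forming a line segment with respect to (x_i, x_j), i.e. x_i·x_j divides m_t for all 1 ≤ t ≤ r and (x_j/x_i)·m_t = m_{t+1} for all 1 ≤ t ≤ r−1. Let J_M be the ideal generated by all monomials of degree d in S not belonging to M. If a, b ≥ 0 are integers such that x_i^a·x_j^b divides m_t for every 1 ≤ t ≤ r, then the multiplication map ×(x_i+x_j)^{a+b} : (S/J_M)_{k−a−b} → (S/J_M)_k has maximal rank for every integer k. -/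
open MvPolynomial

/-!
The ideal `J_M` has no nonzero elements in degrees below `d`, so there multiplication by
`(x_i + x_j)^(a+b)` is injective. Since `S_k = S_{k-d} S_d` for `k ≥ d`, surjectivity onto
degree `d` implies surjectivity onto all higher degrees, and `(S/J_M)_d` is spanned by the line
segment. Writing `m_t = w x_i^(a+r-t) x_j^(b+t-1)`, dehomogenization (`x_i = 1`, `x_j = X`) reduces
surjectivity in degree `d` to prescribing the coefficients of `X^b, …, X^(b+r-1)` in
`(X + 1)^(a+b) p` with `deg p < r`. This is a square linear system, and it is injective: if those
coefficients vanish, at most `a + b` others remain, whereas in characteristic zero a nonzero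
polynomial with a root of multiplicity `N` away from the origin has more than `N` terms.
-/

section SparsePolynomials

open scoped Polynomial

variable {R : Type*} [CommRing R]

lemma coeff_X_mul_derivative_sub_natCast_mul (F : R[X]) (m k : ℕ) :
    (Polynomial.X * Polynomial.derivative F - (m : R[X]) * F).coeff k =
      ((k : R) - m) * F.coeff k := by
  rw [Polynomial.coeff_sub, Polynomial.coeff_natCast_mul, sub_mul]
  cases k with
  | zero => simp
  | succ k => rw [Polynomial.coeff_X_mul, Polynomial.coeff_derivative, mul_comm, Nat.cast_succ]

variable [IsDomain R]

lemma one_lt_card_support_of_isRoot_s5 {α : R} (hα : α ≠ 0) {F : R[X]} (hF : F ≠ 0)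
    (hroot : F.IsRoot α) : 1 < F.support.card := by
  by_contra! hcard
  obtain ⟨m, c, rfl⟩ := Polynomial.card_support_le_one_iff_monomial.1 hcard
  have hc : c ≠ 0 := by simpa using hF
  exact mul_ne_zero hc (pow_ne_zero m hα) (by simpa using hroot)

variable [CharZero R]

lemma support_X_mul_derivative_sub_natCast_mul (F : R[X]) (m : ℕ) :
    (Polynomial.X * Polynomial.derivative F - (m : R[X]) * F).support = F.support.erase m := by
  ext k
  rw [Finset.mem_erase, Polynomial.mem_support_iff, Polynomial.mem_support_iff,
    coeff_X_mul_derivative_sub_natCast_mul, mul_ne_zero_iff, sub_ne_zero,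
    Nat.cast_injective.ne_iff]

-- The operator `F ↦ X F' - m F` deletes the term of degree `m` and costs one root at `α`.
lemma lt_card_support_of_X_sub_C_pow_dvd_s5 {α : R} (hα : α ≠ 0) {N : ℕ} {F : R[X]} (hF : F ≠ 0)
    (hdvd : (Polynomial.X - Polynomial.C α) ^ N ∣ F) : N < F.support.card := by
  induction N generalizing F with
  | zero => simpa [Finset.card_pos] using hF
  | succ N ih =>
    obtain ⟨m, hm⟩ := Polynomial.support_nonempty.2 hF
    set D := Polynomial.X * Polynomial.derivative F - (m : R[X]) * F
    have card_D : D.support.card + 1 = F.support.card := by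
      rw [support_X_mul_derivative_sub_natCast_mul, Finset.card_erase_add_one hm]
    have dvd_D : (Polynomial.X - Polynomial.C α) ^ N ∣ D :=
      dvd_sub ((Polynomial.pow_sub_one_dvd_derivative_of_pow_dvd hdvd).mul_left _)
        (((pow_dvd_pow _ N.le_succ).trans hdvd).mul_left _)
    have root_F : F.IsRoot α :=
      Polynomial.dvd_iff_isRoot.1 ((dvd_pow_self _ N.succ_ne_zero).trans hdvd)
    have one_lt := one_lt_card_support_of_isRoot_s5 hα hF root_F
    have D_ne_zero : D ≠ 0 := Polynomial.card_support_eq_zero.not.1 (by lia)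
    have := ih D_ne_zero dvd_D
    lia

lemma eq_zero_of_coeff_X_sub_C_pow_mul_eq_zero {α : R} (hα : α ≠ 0) {a b r : ℕ} {p : R[X]}
    (hp : p.degree < r)
    (hcoeff : ∀ s < r, ((Polynomial.X - Polynomial.C α) ^ (a + b) * p).coeff (b + s) = 0) :
    p = 0 := by
  by_contra hp0
  set F := (Polynomial.X - Polynomial.C α) ^ (a + b) * p with hF
  have F_ne_zero : F ≠ 0 := mul_ne_zero (pow_ne_zero _ (Polynomial.X_sub_C_ne_zero α)) hp0
  have natDegree_F : F.natDegree < a + b + r := by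
    rw [hF, Polynomial.natDegree_mul (pow_ne_zero _ (Polynomial.X_sub_C_ne_zero α)) hp0,
      Polynomial.natDegree_pow, Polynomial.natDegree_X_sub_C, mul_one]
    have := (Polynomial.natDegree_lt_iff_degree_lt hp0).2 hp
    lia
  have support_F : F.support ⊆ Finset.range b ∪ Finset.Ico (b + r) (a + b + r) := by
    intro k hk
    have hk_lt := (Polynomial.le_natDegree_of_mem_supp k hk).trans_lt natDegree_F
    simp only [Finset.mem_union, Finset.mem_range, Finset.mem_Ico]
    by_contra hk_mid
    refine Polynomial.mem_support_iff.1 hk ?_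
    rw [← hcoeff (k - b) (by lia), Nat.add_sub_cancel' (by lia)]
  have card_le : F.support.card ≤ a + b := by
    refine (Finset.card_le_card support_F).trans ((Finset.card_union_le _ _).trans ?_)
    rw [Finset.card_range, Nat.card_Ico]
    lia
  exact card_le.not_gt (lt_card_support_of_X_sub_C_pow_dvd_s5 hα F_ne_zero (dvd_mul_right _ _))

lemma exists_coeff_X_sub_C_pow_mul_eq {K : Type*} [Field K] [CharZero K] {α : K} (hα : α ≠ 0)
    (a b : ℕ) {r : ℕ} (g : Fin r → K) :
    ∃ p : K[X], p.degree < r ∧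
      ∀ s : Fin r, ((Polynomial.X - Polynomial.C α) ^ (a + b) * p).coeff (b + s) = g s := by
  let middleCoeffs : Polynomial.degreeLT K r →ₗ[K] (Fin r → K) :=
    LinearMap.pi fun s => Polynomial.lcoeff K (b + s) ∘ₗ
      LinearMap.mulLeft K ((Polynomial.X - Polynomial.C α) ^ (a + b)) ∘ₗ
        (Polynomial.degreeLT K r).subtype
  have injective : Function.Injective middleCoeffs := by
    refine (injective_iff_map_eq_zero _).2 fun p hp => Subtype.ext ?_
    exact eq_zero_of_coeff_X_sub_C_pow_mul_eq_zero hα (Polynomial.mem_degreeLT.1 p.2)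
      fun s hs => congrFun hp ⟨s, hs⟩
  have finrank_eq : Module.finrank K (Polynomial.degreeLT K r) = Module.finrank K (Fin r → K) :=
    (Polynomial.degreeLTEquiv K r).finrank_eq
  have : FiniteDimensional K (Polynomial.degreeLT K r) := .equiv (Polynomial.degreeLTEquiv K r).symm
  obtain ⟨p, hp⟩ :=
    (LinearMap.injective_iff_surjective_of_finrank_eq_finrank finrank_eq).1 injective g
  exact ⟨p, Polynomial.mem_degreeLT.1 p.2, congrFun hp⟩

end SparsePolynomials

section BinaryForms

open Finset.HasAntidiagonal (antidiagonal)

variable {R A : Type*} [CommRing R] [CommRing A] [Algebra R A]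

lemma homogenize_X_add_one_pow (N : ℕ) :
    ((Polynomial.X + 1) ^ N : Polynomial R).homogenize N = (X 0 + X 1) ^ N :=
  Polynomial.homogenize_eq_of_isHomogeneous
    (by simpa using ((isHomogeneous_X R 0).add (isHomogeneous_X R 1)).pow N) (by simp)

lemma aeval_homogenize_eq_sum (p : Polynomial R) (N : ℕ) (x y : A) :
    aeval ![x, y] (p.homogenize N) =
      ∑ kl ∈ antidiagonal N, p.coeff kl.1 • (x ^ kl.1 * y ^ kl.2) := by
  rw [Polynomial.homogenize, map_sum]
  refine Finset.sum_congr rfl fun kl _ => ?_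
  simp [aeval_monomial, Finsupp.update_eq_add_single, Finsupp.prod_add_index', pow_add,
    Algebra.smul_def]

lemma add_pow_mul_aeval_homogenize {p : Polynomial R} {m : ℕ} (hp : p.natDegree ≤ m) (N : ℕ)
    (x y : A) :
    (x + y) ^ N * aeval ![x, y] (p.homogenize m) = ∑ kl ∈ antidiagonal (N + m),
      ((Polynomial.X + 1) ^ N * p).coeff kl.1 • (x ^ kl.1 * y ^ kl.2) := by
  have natDegree_le : ((Polynomial.X + 1) ^ N : Polynomial R).natDegree ≤ N := by
    compute_degree
  rw [← aeval_homogenize_eq_sum, Polynomial.homogenize_mul _ _ natDegree_le hp, map_mul,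
    homogenize_X_add_one_pow]
  simp

end BinaryForms

section GradedPieces

variable {K : Type*} [Field K] {n : ℕ} {I : Ideal (MvPolynomial (Fin n) K)}

lemma gradedPiece_of_neg {k : ℤ} (hk : k < 0) : gradedPiece I k = ⊥ :=
  if_neg hk.not_ge

lemma mem_gradedPiece_natCast {m : ℕ} {x : MvPolynomial (Fin n) K ⧸ I} :
    x ∈ gradedPiece I m ↔ ∃ p, p.IsHomogeneous m ∧ Ideal.Quotient.mk I p = x := by
  rw [gradedPiece, if_pos (Int.natCast_nonneg m), Int.toNat_natCast]
  rfl

lemma mul_mem_gradedPiece {k l : ℤ} {x y : MvPolynomial (Fin n) K ⧸ I}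
    (hx : x ∈ gradedPiece I k) (hy : y ∈ gradedPiece I l) : x * y ∈ gradedPiece I (k + l) := by
  rcases lt_or_ge k 0 with hk | hk
  · rw [gradedPiece_of_neg hk, Submodule.mem_bot] at hx
    simp [hx]
  rcases lt_or_ge l 0 with hl | hl
  · rw [gradedPiece_of_neg hl, Submodule.mem_bot] at hy
    simp [hy]
  lift k to ℕ using hk
  lift l to ℕ using hl
  obtain ⟨p, hp, rfl⟩ := mem_gradedPiece_natCast.1 hx
  obtain ⟨q, hq, rfl⟩ := mem_gradedPiece_natCast.1 hy
  rw [← Nat.cast_add]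
  exact mem_gradedPiece_natCast.2 ⟨p * q, hp.mul hq, map_mul _ _ _⟩

lemma gradedPiece_natCast_le_of_monomial_mem {m : ℕ}
    {T : Submodule K (MvPolynomial (Fin n) K ⧸ I)}
    (hT : ∀ s : Fin n →₀ ℕ, s.degree = m → Ideal.Quotient.mk I (monomial s 1) ∈ T) :
    gradedPiece I m ≤ T := by
  intro x hx
  obtain ⟨p, hp, rfl⟩ := mem_gradedPiece_natCast.1 hx
  rw [p.as_sum, map_sum]
  refine T.sum_mem fun s hs => ?_
  have monomial_eq : monomial s (p.coeff s) = p.coeff s • monomial s (1 : K) := by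
    rw [smul_monomial, smul_eq_mul, mul_one]
  rw [monomial_eq]
  exact T.smul_mem _ (hT s (hp.degree_eq_sum_deg_support hs).symm)

lemma gradedPiece_le_map_mulLeft_of_le {f : MvPolynomial (Fin n) K ⧸ I} {c : ℤ} {d k : ℕ}
    (hdk : d ≤ k) (hsurj : gradedPiece I d ≤ (gradedPiece I (d - c)).map (LinearMap.mulLeft K f)) :
    gradedPiece I k ≤ (gradedPiece I (k - c)).map (LinearMap.mulLeft K f) := by
  refine gradedPiece_natCast_le_of_monomial_mem fun s hs => ?_
  obtain ⟨u, hus, hu⟩ := s.exists_le_degree_eq d (hdk.trans_eq hs.symm)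
  obtain ⟨v, rfl⟩ := exists_add_of_le hus
  have hv : v.degree = k - d := by
    rw [map_add] at hs
    lia
  have mk_u_mem : Ideal.Quotient.mk I (monomial u 1) ∈ gradedPiece I d :=
    mem_gradedPiece_natCast.2 ⟨_, isHomogeneous_monomial 1 hu, rfl⟩
  have mk_v_mem : Ideal.Quotient.mk I (monomial v 1) ∈ gradedPiece I (k - d : ℕ) :=
    mem_gradedPiece_natCast.2 ⟨_, isHomogeneous_monomial 1 hv, rfl⟩
  obtain ⟨y, hy, hfy : f * y = _⟩ := hsurj mk_u_mem
  refine ⟨Ideal.Quotient.mk I (monomial v 1) * y, ?_, ?_⟩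
  · have degree_eq : (k - c : ℤ) = (k - d : ℕ) + (d - c) := by lia
    rw [degree_eq]
    exact mul_mem_gradedPiece mk_v_mem hy
  · rw [LinearMap.mulLeft_apply, mul_left_comm, hfy, ← map_mul, monomial_mul, one_mul, add_comm]

end GradedPieces

section ComplementIdeal

variable {σ : Type*}

/-- The ideal `J_M` generated by the monomials of degree `d` lying outside `M`, where monomials
are recorded by their exponent vectors. -/
noncomputable def complementIdeal (R : Type*) [CommSemiring R] (d : ℕ) (M : Set (σ →₀ ℕ)) :
    Ideal (MvPolynomial σ R) :=
  Ideal.span ((fun s => monomial s 1) '' {s | s.degree = d ∧ s ∉ M})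

variable {R : Type*} [CommSemiring R]

lemma span_eq_complementIdeal_range {ι : Type*} {d : ℕ} {e : ι → σ →₀ ℕ} :
    Ideal.span {p : MvPolynomial σ R | ∃ s : σ →₀ ℕ,
      (s.sum fun _ v => v) = d ∧ (∀ t, s ≠ e t) ∧ p = monomial s 1} =
      complementIdeal R d (Set.range e) := by
  refine congrArg Ideal.span (Set.ext fun p => exists_congr fun s => ?_)
  simp [Finsupp.degree_apply, Finsupp.sum, and_assoc, eq_comm]

lemma monomial_mem_complementIdeal {d : ℕ} {M : Set (σ →₀ ℕ)} {s : σ →₀ ℕ} (hs : s.degree = d)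
    (hsM : s ∉ M) : monomial s (1 : R) ∈ complementIdeal R d M :=
  Ideal.subset_span ⟨s, ⟨hs, hsM⟩, rfl⟩

lemma eq_zero_of_mem_complementIdeal {d m : ℕ} {M : Set (σ →₀ ℕ)} {p : MvPolynomial σ R}
    (hp : p.IsHomogeneous m) (hmd : m < d) (hpJ : p ∈ complementIdeal R d M) : p = 0 := by
  rw [← support_eq_empty, Finset.eq_empty_iff_forall_notMem]
  intro v hv
  obtain ⟨s, ⟨hs, -⟩, hsv⟩ := mem_ideal_span_monomial_image.1 hpJ v hv
  have degree_v : m = v.degree := hp.degree_eq_sum_deg_support hv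
  have := Finsupp.degree_mono hsv
  lia

variable {K : Type*} [Field K] {n d c : ℕ} {M : Set (Fin n →₀ ℕ)} {f : MvPolynomial (Fin n) K}

lemma mulLeft_injective_on_gradedPiece_complementIdeal (hf : f.IsHomogeneous c) (hf0 : f ≠ 0)
    {k : ℤ} (hkd : k < d) : ∀ x ∈ gradedPiece (complementIdeal K d M) (k - c),
      LinearMap.mulLeft K (Ideal.Quotient.mk (complementIdeal K d M) f) x = 0 → x = 0 := by
  intro x hx hfx
  rcases lt_or_ge (k - c) 0 with hneg | hnonneg
  · rwa [gradedPiece_of_neg hneg, Submodule.mem_bot] at hx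
  obtain ⟨m, hm⟩ := Int.eq_ofNat_of_zero_le hnonneg
  rw [hm] at hx
  obtain ⟨p, hp, rfl⟩ := mem_gradedPiece_natCast.1 hx
  rw [LinearMap.mulLeft_apply, ← map_mul, Ideal.Quotient.eq_zero_iff_mem] at hfx
  have f_mul_p_eq_zero := eq_zero_of_mem_complementIdeal (hf.mul hp) (by lia) hfx
  rw [(mul_eq_zero.1 f_mul_p_eq_zero).resolve_left hf0, map_zero]

lemma gradedPiece_complementIdeal_le_map_mulLeft
    (hM : ∀ s ∈ M, ∃ G m, G.IsHomogeneous m ∧ c + m = d ∧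
      monomial s 1 - f * G ∈ complementIdeal K d M) :
    gradedPiece (complementIdeal K d M) d ≤ (gradedPiece (complementIdeal K d M) (d - c)).map
      (LinearMap.mulLeft K (Ideal.Quotient.mk (complementIdeal K d M) f)) := by
  refine gradedPiece_natCast_le_of_monomial_mem fun s hs => ?_
  by_cases hsM : s ∈ M
  · obtain ⟨G, m, hG, rfl, hmem⟩ := hM s hsM
    refine ⟨Ideal.Quotient.mk _ G, ?_, ?_⟩
    · rw [Nat.cast_add, add_sub_cancel_left]
      exact mem_gradedPiece_natCast.2 ⟨G, hG, rfl⟩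
    · rw [LinearMap.mulLeft_apply, ← map_mul, Ideal.Quotient.eq.2 hmem]
  · have mk_eq_zero := Ideal.Quotient.eq_zero_iff_mem.2
      (monomial_mem_complementIdeal (R := K) hs hsM)
    rw [mk_eq_zero]
    exact Submodule.zero_mem _

theorem maxRankOn_mulLeft_complementIdeal (hf : f.IsHomogeneous c) (hf0 : f ≠ 0)
    (hM : ∀ s ∈ M, ∃ G m, G.IsHomogeneous m ∧ c + m = d ∧
      monomial s 1 - f * G ∈ complementIdeal K d M) (k : ℤ) :
    MaxRankOn (LinearMap.mulLeft K (Ideal.Quotient.mk (complementIdeal K d M) f))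
      (gradedPiece (complementIdeal K d M) (k - c)) (gradedPiece (complementIdeal K d M) k) := by
  rcases lt_or_ge k d with hkd | hdk
  · exact .inl (mulLeft_injective_on_gradedPiece_complementIdeal hf hf0 hkd)
  · lift k to ℕ using (Int.natCast_nonneg d).trans hdk
    exact .inr (gradedPiece_le_map_mulLeft_of_le (Int.ofNat_le.1 hdk)
      (gradedPiece_complementIdeal_le_map_mulLeft hM))

end ComplementIdeal

section LineSegments

open Finsupp (single)
open Finset.HasAntidiagonal (antidiagonal mem_antidiagonal)

variable {σ : Type*} {i j : σ} {r a b d : ℕ} {w : σ →₀ ℕ} {e : Fin (r + 1) → σ →₀ ℕ}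

lemma X_pow_mul_X_pow_dvd_monomial_iff {R : Type*} [CommSemiring R] [Nontrivial R]
    {v : σ →₀ ℕ} :
    (X i ^ a * X j ^ b : MvPolynomial σ R) ∣ monomial v 1 ↔ single i a + single j b ≤ v := by
  simp [X_pow_eq_monomial, monomial_mul, monomial_dvd_monomial]

lemma segment_add_single
    (hstep : ∀ t : Fin r, e t.succ + single i 1 = e t.castSucc + single j 1) (t : Fin (r + 1)) :
    e t + single i (t : ℕ) = e 0 + single j (t : ℕ) := by
  induction t using Fin.induction with
  | zero => simp
  | succ t ih =>
    rw [Fin.val_castSucc] at ih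
    rw [Fin.val_succ, Finsupp.single_add, Finsupp.single_add, ← add_assoc, ← add_assoc, ← ih,
      add_right_comm, hstep, add_right_comm]

lemma exists_segment_eq (hij : i ≠ j)
    (hstep : ∀ t : Fin r, e t.succ + single i 1 = e t.castSucc + single j 1)
    (hab : ∀ t, single i a + single j b ≤ e t) :
    ∃ w : σ →₀ ℕ, ∀ t, e t = w + single i (a + t.rev) + single j (b + t) := by
  classical
  have le_e_zero : single i (a + r) + single j b ≤ e 0 := by
    intro l
    have e_zero := hab 0 l
    have e_last := hab (Fin.last r) l
    have e_last_add := DFunLike.congr_fun (segment_add_single hstep (Fin.last r)) l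
    simp only [Finsupp.add_apply, Finsupp.single_apply, Fin.val_last] at e_zero e_last e_last_add ⊢
    grind
  obtain ⟨w, hw⟩ := exists_add_of_le le_e_zero
  refine ⟨w, fun t => add_right_cancel (b := single i (t : ℕ)) ?_⟩
  have add_r_eq : a + r = a + t.rev + t := by
    rw [Fin.val_rev]
    lia
  rw [segment_add_single hstep, hw, add_r_eq]
  simp only [Finsupp.single_add]
  abel

lemma monomial_mem_complementIdeal_of_outside_segment {R : Type*} [CommSemiring R] (hij : i ≠ j)
    (he : ∀ t, e t = w + single i (a + t.rev) + single j (b + t))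
    (hd : d = w.degree + (a + b + r)) {k l : ℕ} (hkl : k + l = a + b + r)
    (hk : ∀ t : Fin (r + 1), k ≠ b + t) :
    monomial (w + single i l + single j k) (1 : R) ∈ complementIdeal R d (Set.range e) := by
  refine monomial_mem_complementIdeal ?_ ?_
  · simp only [map_add, Finsupp.degree_single]
    lia
  · rintro ⟨t, ht⟩
    refine hk t ?_
    have := DFunLike.congr_fun ((he t).symm.trans ht) j
    simp only [Finsupp.add_apply, Finsupp.single_eq_same, Finsupp.single_eq_of_ne hij.symm] at this
    lia

lemma monomial_mul_sum_smul_X_pow {R : Type*} [CommSemiring R] (w : σ →₀ ℕ) (N : ℕ) (q : ℕ → R) :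
    monomial w 1 * ∑ kl ∈ antidiagonal N, q kl.1 • (X j ^ kl.1 * X i ^ kl.2) =
      ∑ kl ∈ antidiagonal N, q kl.1 • monomial (w + single i kl.2 + single j kl.1) (1 : R) := by
  simp only [Finset.mul_sum, mul_smul_comm, X_pow_eq_monomial, monomial_mul, mul_one]
  refine Finset.sum_congr rfl fun kl _ => ?_
  rw [add_comm (single j _), add_assoc]

lemma monomial_sub_sum_mem_complementIdeal {R : Type*} [CommRing R] (hij : i ≠ j)
    (he : ∀ t, e t = w + single i (a + t.rev) + single j (b + t))
    (hd : d = w.degree + (a + b + r)) {t : Fin (r + 1)} {q : ℕ → R}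
    (hq : ∀ s : Fin (r + 1), q (b + s) = (Pi.single t 1 : Fin (r + 1) → R) s) :
    monomial (e t) 1 - ∑ kl ∈ antidiagonal (a + b + r),
      q kl.1 • monomial (w + single i kl.2 + single j kl.1) 1 ∈
        complementIdeal R d (Set.range e) := by
  have mem_antidiagonal_t : (b + (t : ℕ), a + (t.rev : ℕ)) ∈ antidiagonal (a + b + r) := by
    rw [mem_antidiagonal, Fin.val_rev]
    lia
  rw [← Finset.add_sum_erase _ _ mem_antidiagonal_t, hq t, Pi.single_eq_same, one_smul, ← he t,
    sub_add_cancel_left]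
  refine neg_mem (sum_mem fun kl hkl => ?_)
  obtain ⟨kl_ne, kl_mem⟩ := Finset.mem_erase.1 hkl
  rw [mem_antidiagonal] at kl_mem
  rw [smul_eq_C_mul]
  by_cases hs : ∃ s : Fin (r + 1), kl.1 = b + s
  · obtain ⟨s, hs⟩ := hs
    have s_ne_t : s ≠ t := by
      rintro rfl
      refine kl_ne (Prod.ext hs ?_)
      rw [Fin.val_rev]
      lia
    rw [hs, hq s, Pi.single_eq_of_ne s_ne_t, C_0, zero_mul]
    exact zero_mem _
  · push Not at hs
    exact Ideal.mul_mem_left _ _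
      (monomial_mem_complementIdeal_of_outside_segment hij he hd kl_mem hs)

variable {K : Type*} [Field K] [CharZero K]

lemma exists_sub_mem_complementIdeal_of_ne (hij : i ≠ j)
    (hdeg : ∀ t, (e t).degree = d)
    (hstep : ∀ t : Fin r, e t.succ + single i 1 = e t.castSucc + single j 1)
    (hab : ∀ t, single i a + single j b ≤ e t) (t : Fin (r + 1)) :
    ∃ (G : MvPolynomial σ K) (m : ℕ), G.IsHomogeneous m ∧ a + b + m = d ∧
      monomial (e t) 1 - (X i + X j) ^ (a + b) * G ∈ complementIdeal K d (Set.range e) := by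
  obtain ⟨w, he⟩ := exists_segment_eq hij hstep hab
  have hd : d = w.degree + (a + b + r) := by
    rw [← hdeg 0, he 0]
    simp only [map_add, Finsupp.degree_single, Fin.rev_zero, Fin.val_last, Fin.val_zero]
    lia
  obtain ⟨p, hp, hcoeff⟩ := exists_coeff_X_sub_C_pow_mul_eq (neg_ne_zero.2 (one_ne_zero' K)) a b
    (Pi.single t 1 : Fin (r + 1) → K)
  rw [map_neg, map_one, sub_neg_eq_add] at hcoeff
  have natDegree_p : p.natDegree ≤ r :=
    Polynomial.natDegree_le_iff_coeff_eq_zero.2 ((Polynomial.degree_lt_iff_coeff_zero p _).1 hp)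
  have isHomogeneous_form := (Polynomial.isHomogeneous_homogenize (n := r) p).aeval (n := 1)
    ![(X j : MvPolynomial σ K), X i] (by simp [Fin.forall_fin_two, isHomogeneous_X])
  rw [one_mul] at isHomogeneous_form
  refine ⟨monomial w 1 * aeval ![X j, X i] (p.homogenize r), w.degree + r,
    (isHomogeneous_monomial 1 rfl).mul isHomogeneous_form, by lia, ?_⟩
  rw [mul_left_comm, add_comm (X i), add_pow_mul_aeval_homogenize natDegree_p,
    monomial_mul_sum_smul_X_pow]
  exact monomial_sub_sum_mem_complementIdeal hij he hd hcoeff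

lemma exists_X_add_X_self_pow_mul_eq_monomial {c : ℕ} {v : σ →₀ ℕ} (hv : single i c ≤ v) :
    ∃ (G : MvPolynomial σ K) (m : ℕ), G.IsHomogeneous m ∧ c + m = v.degree ∧
      (X i + X i) ^ c * G = monomial v 1 := by
  obtain ⟨u, rfl⟩ := exists_add_of_le hv
  refine ⟨monomial u (2 ^ c)⁻¹, u.degree, isHomogeneous_monomial _ rfl, by simp, ?_⟩
  have X_add_X : (X i + X i : MvPolynomial σ K) = monomial (single i 1) 2 := by
    rw [X, ← map_add, one_add_one_eq_two]
  rw [X_add_X, monomial_pow, monomial_mul, mul_inv_cancel₀ (pow_ne_zero c two_ne_zero)]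
  simp

lemma exists_sub_mem_complementIdeal
    (hdeg : ∀ t, (e t).degree = d)
    (hstep : ∀ t : Fin r, e t.succ + single i 1 = e t.castSucc + single j 1)
    (hab : ∀ t, single i a + single j b ≤ e t) (t : Fin (r + 1)) :
    ∃ (G : MvPolynomial σ K) (m : ℕ), G.IsHomogeneous m ∧ a + b + m = d ∧
      monomial (e t) 1 - (X i + X j) ^ (a + b) * G ∈ complementIdeal K d (Set.range e) := by
  rcases eq_or_ne i j with rfl | hij
  · have single_le : single i (a + b) ≤ e t := by
      rw [Finsupp.single_add]
      exact hab t
    obtain ⟨G, m, hG, hm, hmul⟩ := exists_X_add_X_self_pow_mul_eq_monomial (K := K) single_le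
    refine ⟨G, m, hG, hm.trans (hdeg t), ?_⟩
    rw [hmul, sub_self]
    exact zero_mem _
  · exact exists_sub_mem_complementIdeal_of_ne hij hdeg hstep hab t

lemma X_add_X_ne_zero {R : Type*} [CommSemiring R] [CharZero R] (i j : σ) :
    (X i + X j : MvPolynomial σ R) ≠ 0 := by
  intro h
  have := congrArg (eval fun _ => (1 : R)) h
  norm_num at this

end LineSegments

theorem line_segment_complement_has_maximal_rank_general
    (K : Type*) [Field K] [CharZero K] (n d r : ℕ) (i j : Fin n)
    (e : Fin r → (Fin n →₀ ℕ))
    (hdeg : ∀ t, ((e t).sum fun _ v => v) = d)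
    (hstep : ∀ (t : Fin r) (ht : (t : ℕ) + 1 < r),
      e ⟨(t : ℕ) + 1, ht⟩ + Finsupp.single i 1 = e t + Finsupp.single j 1)
    (J : Ideal (MvPolynomial (Fin n) K))
    (hJ : J = Ideal.span {p : MvPolynomial (Fin n) K | ∃ s : Fin n →₀ ℕ,
      (s.sum fun _ v => v) = d ∧ (∀ t, s ≠ e t) ∧ p = monomial s 1})
    (a b : ℕ)
    (hab : ∀ t, (X i ^ a * X j ^ b : MvPolynomial (Fin n) K) ∣ monomial (e t) 1) :
    ∀ k : ℤ,
      MaxRankOn (LinearMap.mulLeft K (Ideal.Quotient.mk J ((X i + X j) ^ (a + b))))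
        (gradedPiece J (k - (a + b))) (gradedPiece J k) := by
  intro k
  obtain rfl : J = complementIdeal K d (Set.range e) := hJ.trans span_eq_complementIdeal_range
  have isHomogeneous_pow : ((X i + X j) ^ (a + b) : MvPolynomial (Fin n) K).IsHomogeneous
      (a + b) := by
    simpa using ((isHomogeneous_X K i).add (isHomogeneous_X K j)).pow (a + b)
  rw [← Nat.cast_add]
  refine maxRankOn_mulLeft_complementIdeal isHomogeneous_pow
    (pow_ne_zero _ (X_add_X_ne_zero i j)) ?_ k
  rintro _ ⟨t, rfl⟩
  cases r with
  | zero => exact t.elim0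
  | succ r =>
    exact exists_sub_mem_complementIdeal hdeg (fun t => hstep t.castSucc (by simp))
      (fun t => X_pow_mul_X_pow_dvd_monomial_iff.1 (hab t)) t

/-- Let `M = {m_1,…,m_r}` be a set of degree-`d` monomials in
`S = K[x_1,…,x_n]` forming a line segment with respect to `(x_i, x_j)`
(each `m_t` is divisible by `x_i x_j` and `(x_j/x_i)·m_t = m_{t+1}`), and let `J_M` be the
ideal generated by all degree-`d` monomials not in `M`. If `x_i^a x_j^b` divides every `m_t`,
then `×(x_i+x_j)^{a+b} : (S/J_M)_{k-a-b} → (S/J_M)_k` has maximal rank for every integer `k`.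
(Monomials are recorded by their exponent vectors `e t : Fin n →₀ ℕ`, so `m_t = monomial (e t) 1`.) -/
theorem line_segment_complement_has_maximal_rank
    (K : Type*) [Field K] [CharZero K] (n d r : ℕ) (i j : Fin n)
    (e : Fin r → (Fin n →₀ ℕ))
    (hdeg : ∀ t, ((e t).sum fun _ v => v) = d)
    (hsegdvd : ∀ t, (X i * X j : MvPolynomial (Fin n) K) ∣ monomial (e t) 1)
    (hstep : ∀ (t : Fin r) (ht : (t : ℕ) + 1 < r),
      e ⟨(t : ℕ) + 1, ht⟩ + Finsupp.single i 1 = e t + Finsupp.single j 1)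
    (J : Ideal (MvPolynomial (Fin n) K))
    (hJ : J = Ideal.span {p : MvPolynomial (Fin n) K | ∃ s : Fin n →₀ ℕ,
      (s.sum fun _ v => v) = d ∧ (∀ t, s ≠ e t) ∧ p = monomial s 1})
    (a b : ℕ)
    (hab : ∀ t, (X i ^ a * X j ^ b : MvPolynomial (Fin n) K) ∣ monomial (e t) 1) :
    ∀ k : ℤ,
      MaxRankOn (LinearMap.mulLeft K (Ideal.Quotient.mk J ((X i + X j) ^ (a + b))))
        (gradedPiece J (k - (a + b))) (gradedPiece J k) :=
  line_segment_complement_has_maximal_rank_general K n d r i j e hdeg hstep J hJ a b hab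
end

section
/- Let K be a field of characteristic zero and let I ⊂ S = K[x_1,…,x_n] be an artinian monomial ideal generated in a single degree d such that every monomial of degree d not contained in I is divisible by the product x_1·x_2·⋯·x_n. Then for every pair of integers 1 ≤ i < j ≤ n, the multiplication map ×(x_i+x_j)^2 : (S/I)_{d−2} → (S/I)_d is surjective; equivalently, 𝔪^d ⊆ I + (x_i + x_j)^2, where 𝔪 = (x_1,…,x_n) is the maximal homogeneous ideal. -/
open MvPolynomial

/-!
Fix a monomial `w` of degree `d - m` in the variables other than `x_i` and `x_j`, and put
`u_b = w x_i ^ (m - b) (-x_j) ^ b` for `0 ≤ b ≤ m`. Multiplying `w x_i ^ (m - b - 2) (-x_j) ^ b` by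
`(x_i + x_j) ^ 2` gives the second difference `u_b - 2 u_{b+1} + u_{b+2}`, so modulo the image of
`(x_i + x_j) ^ 2` the `u_b` form an arithmetic progression. Its two ends `u_0` and `u_m` miss one of
the variables `x_i`, `x_j`, hence lie in `I`; an arithmetic progression `u_b = b u_1` with
`u_m = m u_1 = 0` vanishes as soon as `m` is invertible.
-/

section SecondDifference

variable {M : Type*} [AddCommGroup M]

lemma sub_nsmul_mem_of_second_difference_mem (W : AddSubgroup M) {u : ℕ → M} {m : ℕ}
    (h_start : u 0 ∈ W) (h_diff : ∀ b, b + 2 ≤ m → u b - 2 • u (b + 1) + u (b + 2) ∈ W)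
    {b : ℕ} (hb : b ≤ m) : u b - b • u 1 ∈ W := by
  induction b using Nat.twoStepInduction with
  | zero => simpa using h_start
  | one => simp
  | more b ih ih_succ =>
    have h_combination : u (b + 2) - (b + 2) • u 1 = (u b - 2 • u (b + 1) + u (b + 2))
        - (u b - b • u 1) + 2 • (u (b + 1) - (b + 1) • u 1) := by module
    rw [h_combination]
    exact W.add_mem (W.sub_mem (h_diff b hb) (ih (by lia))) (W.nsmul_mem (ih_succ (by lia)) 2)

lemma mem_of_second_difference_mem {R : Type*} [Ring R] [Module R M] (W : Submodule R M)
    {u : ℕ → M} {m : ℕ} (hm : m ≠ 0 → IsUnit (m : R)) (h_start : u 0 ∈ W) (h_end : u m ∈ W)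
    (h_diff : ∀ b, b + 2 ≤ m → u b - 2 • u (b + 1) + u (b + 2) ∈ W)
    {b : ℕ} (hb : b ≤ m) : u b ∈ W := by
  have h_progression {c : ℕ} (hc : c ≤ m) : u c - c • u 1 ∈ W :=
    sub_nsmul_mem_of_second_difference_mem W.toAddSubgroup h_start h_diff hc
  rcases eq_or_ne m 0 with rfl | hm_ne
  · rwa [Nat.le_zero.mp hb]
  have h_one : u 1 ∈ W := by
    rw [← W.smul_mem_iff_of_isUnit (hm hm_ne), Nat.cast_smul_eq_nsmul]
    exact (W.sub_mem_iff_right h_end).mp (h_progression le_rfl)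
  exact (W.sub_mem_iff_left (W.nsmul_mem h_one b)).mp (h_progression hb)

end SecondDifference

section BinaryForms

variable {R A : Type*} [CommRing R] [CommRing A] [Algebra R A] (W : Submodule R A)

lemma mul_neg_pow_mem_iff (a y : A) (b : ℕ) : a * (-y) ^ b ∈ W ↔ a * y ^ b ∈ W := by
  rcases b.even_or_odd with hb | hb
  · rw [hb.neg_pow]
  · rw [hb.neg_pow, mul_neg, W.neg_mem_iff]

lemma mul_pow_mul_pow_mem_of_mul_add_sq_mem {a x y : A} {m : ℕ} (hm : m ≠ 0 → IsUnit (m : R))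
    (hx : a * x ^ m ∈ W) (hy : a * y ^ m ∈ W)
    (h_sq : ∀ c b, c + b + 2 = m → a * x ^ c * y ^ b * (x + y) ^ 2 ∈ W)
    {c b : ℕ} (hcb : c + b = m) : a * x ^ c * y ^ b ∈ W := by
  let u (k : ℕ) : A := a * x ^ (m - k) * (-y) ^ k
  have h_diff (k : ℕ) (hk : k + 2 ≤ m) : u k - 2 • u (k + 1) + u (k + 2) ∈ W := by
    obtain ⟨l, rfl⟩ := Nat.exists_eq_add_of_le' hk
    have h_factor : u k - 2 • u (k + 1) + u (k + 2) =
        a * x ^ l * (x + y) ^ 2 * (-y) ^ k := by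
      simp only [u, show l + (k + 2) - k = l + 2 by lia, show l + (k + 2) - (k + 1) = l + 1 by lia,
        Nat.add_sub_cancel]
      ring
    rw [h_factor, mul_neg_pow_mem_iff, mul_right_comm]
    exact h_sq l k (by lia)
  have hu : u b ∈ W := mem_of_second_difference_mem W hm (by simpa [u] using hx)
    (by simpa [u, mul_neg_pow_mem_iff] using hy) h_diff (by lia)
  rwa [mul_neg_pow_mem_iff, show m - b = c by lia] at hu

end BinaryForms

section HomogeneousPolynomials

variable {σ R : Type*}

lemma apply_ne_zero_of_prod_X_dvd_monomial [Fintype σ] [CommSemiring R] {s : σ →₀ ℕ} {r : R}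
    (hr : r ≠ 0) (h : (∏ t, X t : MvPolynomial σ R) ∣ monomial s r) (k : σ) : s k ≠ 0 :=
  (X_dvd_monomial.mp ((Finset.dvd_prod_of_mem X (Finset.mem_univ k)).trans h)).resolve_left hr

lemma exists_eq_add_single_add_single {i j : σ} (hij : i ≠ j) (s : σ →₀ ℕ) :
    ∃ w : σ →₀ ℕ, w i = 0 ∧ w j = 0 ∧
      s = w + Finsupp.single i (s i) + Finsupp.single j (s j) := by
  refine ⟨(s.erase j).erase i, Finsupp.erase_same, by simp [Finsupp.erase_ne hij.symm], ?_⟩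
  rw [← Finsupp.erase_ne hij, Finsupp.erase_add_single, Finsupp.erase_add_single]

lemma homogeneousSubmodule_le_iff_monomial_mem [CommSemiring R]
    {W : Submodule R (MvPolynomial σ R)} {d : ℕ} :
    homogeneousSubmodule σ R d ≤ W ↔ ∀ s : σ →₀ ℕ, s.degree = d → monomial s 1 ∈ W := by
  rw [homogeneousSubmodule_eq_finsupp_supported, AddMonoidAlgebra.supported_eq_span_single,
    Submodule.span_le, Set.image_subset_iff]
  rfl

variable [CommRing R] {i j : σ} {d : ℕ}

theorem homogeneousSubmodule_le_of_X_add_X_sq_mul_mem {W : Submodule R (MvPolynomial σ R)}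
    (hd : IsUnit (d.factorial : R)) (hij : i ≠ j)
    (h_missing : ∀ s : σ →₀ ℕ, s.degree = d → s i = 0 ∨ s j = 0 → monomial s 1 ∈ W)
    (h_sq : ∀ (e : ℕ) (q : MvPolynomial σ R), e + 2 = d → q.IsHomogeneous e →
      (X i + X j) ^ 2 * q ∈ W) :
    homogeneousSubmodule σ R d ≤ W := by
  refine homogeneousSubmodule_le_iff_monomial_mem.mpr fun s hs ↦ ?_
  obtain ⟨w, hwi, hwj, hsw⟩ := exists_eq_add_single_add_single hij s
  have h_degree : w.degree + (s i + s j) = d := by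
    rw [← hs, hsw]
    simp [hwi, hwj, hij, hij.symm, add_assoc]
  have h_unit (hm : s i + s j ≠ 0) : IsUnit ((s i + s j : ℕ) : R) :=
    isUnit_of_dvd_unit (Nat.cast_dvd_cast (Nat.dvd_factorial (by lia) (by lia))) hd
  rw [hsw, monomial_add_single, monomial_add_single]
  refine mul_pow_mul_pow_mem_of_mul_add_sq_mem W h_unit ?_ ?_ (fun c b hcb ↦ ?_) rfl
  · rw [← monomial_add_single]
    exact h_missing _ (by simpa using h_degree) (.inr (by simp [hwj, hij]))
  · rw [← monomial_add_single]
    exact h_missing _ (by simpa using h_degree) (.inl (by simp [hwi, hij.symm]))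
  · rw [← monomial_add_single, ← monomial_add_single, mul_comm]
    refine h_sq (w.degree + c + b) _ (by lia) (isHomogeneous_monomial _ ?_)
    simp

theorem pow_idealOfVars_le_add_span_X_add_X_sq {I : Ideal (MvPolynomial σ R)}
    (hd : IsUnit (d.factorial : R)) (hij : i ≠ j)
    (h_missing : ∀ s : σ →₀ ℕ, s.degree = d → s i = 0 ∨ s j = 0 → monomial s 1 ∈ I) :
    idealOfVars σ R ^ d ≤ I + Ideal.span {(X i + X j) ^ 2} := by
  have h_homogeneous : homogeneousSubmodule σ R d ≤
      (I + Ideal.span {(X i + X j) ^ 2}).restrictScalars R :=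
    homogeneousSubmodule_le_of_X_add_X_sq_mul_mem hd hij
      (fun s hs h ↦ Ideal.mem_sup_left (h_missing s hs h))
      (fun _ q _ _ ↦ Ideal.mem_sup_right
        (Ideal.mul_mem_right q _ (Ideal.mem_span_singleton_self _)))
  rw [pow_idealOfVars_eq_span, Ideal.span_le]
  rintro _ ⟨s, hs, rfl⟩
  exact h_homogeneous (isHomogeneous_monomial 1 hs)

end HomogeneousPolynomials

section GradedPiece

variable {K : Type*} [Field K] {n d : ℕ} {I : Ideal (MvPolynomial (Fin n) K)}

lemma gradedPiece_natCast : gradedPiece I (d : ℤ) =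
    (homogeneousSubmodule (Fin n) K d).map (Ideal.Quotient.mkₐ K I).toLinearMap :=
  if_pos (Int.natCast_nonneg d)

theorem gradedPiece_le_map_mulLeft_X_add_X_sq (hd : (d.factorial : K) ≠ 0)
    {i j : Fin n} (hij : i ≠ j)
    (h_missing : ∀ s : Fin n →₀ ℕ, s.degree = d → s i = 0 ∨ s j = 0 → monomial s 1 ∈ I) :
    gradedPiece I (d : ℤ) ≤ (gradedPiece I ((d : ℤ) - 2)).map
      (LinearMap.mulLeft K (Ideal.Quotient.mk I ((X i + X j) ^ 2))) := by
  rw [gradedPiece_natCast, Submodule.map_le_iff_le_comap]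
  refine homogeneousSubmodule_le_of_X_add_X_sq_mul_mem hd.isUnit hij (fun s hs h ↦ ?_) ?_
  · have h_zero : Ideal.Quotient.mk I (monomial s 1) = 0 :=
      Ideal.Quotient.eq_zero_iff_mem.mpr (h_missing s hs h)
    simp [h_zero]
  · rintro e q rfl hq
    have h_degree : ((e + 2 : ℕ) : ℤ) - 2 = e := by lia
    rw [h_degree, gradedPiece_natCast]
    exact ⟨_, ⟨q, hq, rfl⟩, (map_mul (Ideal.Quotient.mk I) _ _).symm⟩

end GradedPiece

theorem EHU_conjecture_for_monomial_ideals_with_full_support_socle_general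
    {K : Type*} [Field K] {n d : ℕ} (hd : (d.factorial : K) ≠ 0)
    (I : Ideal (MvPolynomial (Fin n) K)) {i j : Fin n} (hij : i ≠ j)
    (h_missing : ∀ s : Fin n →₀ ℕ, s.degree = d → s i = 0 ∨ s j = 0 → monomial s 1 ∈ I) :
    (gradedPiece I (d : ℤ) ≤
      (gradedPiece I ((d : ℤ) - 2)).map
        (LinearMap.mulLeft K (Ideal.Quotient.mk I ((X i + X j) ^ 2)))) ∧
    ((Ideal.span (Set.range (X : Fin n → MvPolynomial (Fin n) K))) ^ d ≤
      I + Ideal.span {((X i + X j) ^ 2 : MvPolynomial (Fin n) K)}) :=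
  ⟨gradedPiece_le_map_mulLeft_X_add_X_sq hd hij h_missing,
    pow_idealOfVars_le_add_span_X_add_X_sq hd.isUnit hij h_missing⟩

/-- Let `I ⊆ K[x_1,…,x_n]` be an artinian monomial ideal generated in the
single degree `d` (`K` of characteristic zero) such that every degree-`d` monomial not in `I`
is divisible by `x_1 x_2 ⋯ x_n`. Then for every pair `i < j` the multiplication map
`×(x_i+x_j)^2 : (S/I)_{d-2} → (S/I)_d` is surjective; equivalently
`𝔪^d ⊆ I + (x_i + x_j)^2` where `𝔪 = (x_1,…,x_n)`. -/
theorem EHU_conjecture_for_monomial_ideals_with_full_support_socle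
    (K : Type*) [Field K] [CharZero K] (n d : ℕ)
    (I : Ideal (MvPolynomial (Fin n) K))
    (hart : Module.Finite K (MvPolynomial (Fin n) K ⧸ I))
    (hmon : ∃ G : Set (Fin n →₀ ℕ), (∀ s ∈ G, (s.sum fun _ v => v) = d) ∧
      I = Ideal.span ((fun s => monomial s (1 : K)) '' G))
    (hdvd : ∀ s : Fin n →₀ ℕ, (s.sum fun _ v => v) = d → monomial s (1 : K) ∉ I →
      (∏ t : Fin n, X t : MvPolynomial (Fin n) K) ∣ monomial s 1) :
    ∀ i j : Fin n, i < j →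
      (gradedPiece I (d : ℤ) ≤
        (gradedPiece I ((d : ℤ) - 2)).map
          (LinearMap.mulLeft K (Ideal.Quotient.mk I ((X i + X j) ^ 2)))) ∧
      ((Ideal.span (Set.range (X : Fin n → MvPolynomial (Fin n) K))) ^ d ≤
        I + Ideal.span {((X i + X j) ^ 2 : MvPolynomial (Fin n) K)}) := by
  intro i j hij
  exact EHU_conjecture_for_monomial_ideals_with_full_support_socle_general
    (Nat.cast_ne_zero.mpr d.factorial_ne_zero) I hij.ne fun s hs h_missing ↦
      by_contra fun h_notMem ↦
        have h_support := apply_ne_zero_of_prod_X_dvd_monomial one_ne_zero (hdvd s hs h_notMem)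
        h_missing.elim (h_support i) (h_support j)
end

section
/- Let K be a field of characteristic zero and let F = Σ_m a_m·m be a homogeneous polynomial of degree d in R = K[y_1,…,y_n] such that (∂/∂y_1 + ∂/∂y_2 + ⋯ + ∂/∂y_n)(F) = 0. If m is a monomial with a_m ≠ 0 and y_i divides m, then for every integer j with 0 ≤ j < deg_i(m) there exists a monomial m_{i,j} of degree d with deg_i(m_{i,j}) = j and a_{m_{i,j}} ≠ 0 (i.e., m_{i,j} lies in the support of F). -/
open MvPolynomial

/-!
Let `u + eᵢ` be the exponent of a monomial of `F`. The coefficient of `y^u` in `∑ cₗ ∂ₗF` is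
`∑ cₗ (uₗ + 1) a_{u + eₗ}`, and its `l = i` term is nonzero in characteristic zero when `cᵢ ≠ 0`.
If the sum vanishes, another term is nonzero, so some `u + eₗ` with `l ≠ i` occurs in `F`: one
factor `yᵢ` has been traded for `yₗ`, preserving the degree. Iterating lowers the exponent of `yᵢ`
one step at a time.
-/

section DirectionalDerivative

variable {σ R : Type*} [CommSemiring R] {F : MvPolynomial σ R} {s : Finset σ} {c : σ → R} {i : σ}

theorem coeff_sum_smul_pderiv (F : MvPolynomial σ R) (s : Finset σ) (c : σ → R) (u : σ →₀ ℕ) :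
    coeff u (∑ l ∈ s, c l • pderiv l F) =
      ∑ l ∈ s, c l * (coeff (u + Finsupp.single l 1) F * (u l + 1)) := by
  simp only [coeff_sum, coeff_smul, coeff_pderiv, smul_eq_mul]

variable [NoZeroDivisors R] [CharZero R]

theorem exists_ne_coeff_add_single_ne_zero_of_sum_smul_pderiv_eq_zero
    (hder : ∑ l ∈ s, c l • pderiv l F = 0) (his : i ∈ s) (hci : c i ≠ 0) {u : σ →₀ ℕ}
    (hu : coeff (u + Finsupp.single i 1) F ≠ 0) :
    ∃ l ≠ i, coeff (u + Finsupp.single l 1) F ≠ 0 := by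
  by_contra! hvanish
  have hterm : c i * (coeff (u + Finsupp.single i 1) F * (u i + 1)) ≠ 0 :=
    mul_ne_zero hci (mul_ne_zero hu (Nat.cast_add_one_ne_zero _))
  apply hterm
  calc c i * (coeff (u + Finsupp.single i 1) F * (u i + 1))
      = ∑ l ∈ s, c l * (coeff (u + Finsupp.single l 1) F * (u l + 1)) := by
        symm
        refine Finset.sum_eq_single_of_mem i his fun l _ hli => ?_
        rw [hvanish l hli, zero_mul, mul_zero]
    _ = 0 := by rw [← coeff_sum_smul_pderiv, hder, coeff_zero]

theorem exists_coeff_ne_zero_degree_eq_of_apply_eq_add_one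
    (hder : ∑ l ∈ s, c l • pderiv l F = 0) (his : i ∈ s) (hci : c i ≠ 0) {m : σ →₀ ℕ}
    (hm : coeff m F ≠ 0) {k : ℕ} (hk : m i = k + 1) :
    ∃ m' : σ →₀ ℕ, m'.degree = m.degree ∧ m' i = k ∧ coeff m' F ≠ 0 := by
  obtain ⟨u, rfl⟩ : ∃ u, m = u + Finsupp.single i 1 :=
    ⟨m - Finsupp.single i 1, (Finsupp.sub_add_single_one_cancel (by lia)).symm⟩
  obtain ⟨l, hli, hl⟩ :=
    exists_ne_coeff_add_single_ne_zero_of_sum_smul_pderiv_eq_zero hder his hci hm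
  refine ⟨u + Finsupp.single l 1, ?_, ?_, hl⟩
  · simp only [map_add, Finsupp.degree_single]
  · simpa [Finsupp.single_eq_of_ne hli.symm] using hk

theorem support_of_kernel_of_sum_of_derivatives_general (hder : ∑ l ∈ s, c l • pderiv l F = 0)
    (his : i ∈ s) (hci : c i ≠ 0) {m : σ →₀ ℕ} (hm : coeff m F ≠ 0) {j : ℕ} (hj : j ≤ m i) :
    ∃ m' : σ →₀ ℕ, m'.degree = m.degree ∧ m' i = j ∧ coeff m' F ≠ 0 := by
  induction hj using Nat.decreasingInduction with
  | self => exact ⟨m, rfl, rfl, hm⟩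
  | of_succ k _ ih =>
    obtain ⟨m₁, hdeg, hm₁i, hm₁⟩ := ih
    rw [← hdeg]
    exact exists_coeff_ne_zero_degree_eq_of_apply_eq_add_one hder his hci hm₁ hm₁i

end DirectionalDerivative

/-- Let `F` be a homogeneous polynomial of degree `d` in
`R = K[y_1,…,y_n]` (`K` of characteristic zero) with `(∂/∂y_1 + ⋯ + ∂/∂y_n)(F) = 0`.
If a monomial `m` (given by its exponent vector) appears in `F` with nonzero coefficient
and `y_i ∣ m`, then for every `0 ≤ j < deg_i(m)` there is a monomial `m'` of degree `d`
with `deg_i(m') = j` appearing in `F` with nonzero coefficient. -/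
theorem support_of_kernel_of_sum_of_derivatives
    (K : Type*) [Field K] [CharZero K] (n d : ℕ)
    (F : MvPolynomial (Fin n) K) (hF : F.IsHomogeneous d)
    (hder : (∑ i : Fin n, pderiv i F) = 0)
    (m : Fin n →₀ ℕ) (hm : coeff m F ≠ 0) (i : Fin n) (hi : 1 ≤ m i) :
    ∀ j : ℕ, j < m i → ∃ m' : Fin n →₀ ℕ,
      (m'.sum fun _ v => v) = d ∧ m' i = j ∧ coeff m' F ≠ 0 := by
  intro j hj
  rw [hF.degree_eq_sum_deg_support (mem_support_iff.mpr hm)]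
  exact support_of_kernel_of_sum_of_derivatives_general (c := 1)
    (by simpa only [Pi.one_apply, one_smul] using hder) (Finset.mem_univ i) one_ne_zero hm hj.le
end

section
/- Let K be a field of characteristic zero. If F is a nonzero homogeneous polynomial of degree d in K[y_1,…,y_n] satisfying (∂/∂y_1 + ∂/∂y_2 + ⋯ + ∂/∂y_n)(F) = 0, then F has at least d+1 distinct monomials in its support. -/
open MvPolynomial

/-!
Let `D = ∑ aⱼ ∂ⱼ` with every `aⱼ` nonzero, and let `D F = 0`. Among the monomials of `F`, one in
which `yᵢ` has least exponent cannot involve `yᵢ`: otherwise nothing could cancel its image under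
`aᵢ ∂ᵢ` in `D F`. As `∂ᵢ` kills this monomial, `∂ᵢ F` has fewer monomials than `F`, and it lies
again in the kernel of `D`. Differentiating along the variables of a monomial of degree `d`
in `F` gives `d` successive derivatives, each of which loses a monomial, and the last is nonzero.
-/

section PartialDerivatives

variable {σ R : Type*} [CommSemiring R]

theorem pderiv_pderiv_comm (i j : σ) (F : MvPolynomial σ R) :
    pderiv i (pderiv j F) = pderiv j (pderiv i F) := by
  ext m
  rcases eq_or_ne i j with rfl | hij
  · rfl
  · simp only [coeff_pderiv, Finsupp.add_apply, Finsupp.single_eq_of_ne hij,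
      Finsupp.single_eq_of_ne hij.symm, add_zero, add_right_comm m, mul_right_comm]

theorem sum_smul_pderiv_pderiv_eq_zero {s : Finset σ} {a : σ → R} {F : MvPolynomial σ R}
    (hF : ∑ j ∈ s, a j • pderiv j F = 0) (i : σ) :
    ∑ j ∈ s, a j • pderiv j (pderiv i F) = 0 := by
  calc ∑ j ∈ s, a j • pderiv j (pderiv i F)
      = pderiv i (∑ j ∈ s, a j • pderiv j F) := by
        simp only [map_sum, Derivation.map_smul, pderiv_pderiv_comm i]
    _ = 0 := by rw [hF, map_zero]

theorem add_single_mem_support_of_mem_support_pderiv {F : MvPolynomial σ R} {i : σ} {m : σ →₀ ℕ}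
    (hm : m ∈ (pderiv i F).support) : m + Finsupp.single i 1 ∈ F.support := by
  rw [mem_support_iff, coeff_pderiv] at hm
  exact mem_support_iff.2 (left_ne_zero_of_mul hm)

theorem card_support_pderiv_lt {F : MvPolynomial σ R} {i : σ} {m : σ →₀ ℕ}
    (hm : m ∈ F.support) (hmi : m i = 0) : (pderiv i F).support.card < F.support.card := by
  let shift : (σ →₀ ℕ) ↪ (σ →₀ ℕ) := addRightEmbedding (Finsupp.single i 1)
  have shift_subset : (pderiv i F).support.map shift ⊆ F.support := by
    intro v hv
    obtain ⟨u, hu, rfl⟩ := Finset.mem_map.1 hv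
    exact add_single_mem_support_of_mem_support_pderiv hu
  have not_mem_shift : m ∉ (pderiv i F).support.map shift := by
    intro hv
    obtain ⟨u, -, rfl⟩ := Finset.mem_map.1 hv
    simp [shift] at hmi
  calc (pderiv i F).support.card
      = ((pderiv i F).support.map shift).card := (Finset.card_map shift).symm
    _ < F.support.card :=
      Finset.card_lt_card ((Finset.ssubset_iff_of_subset shift_subset).2 ⟨m, hm, not_mem_shift⟩)

variable [NoZeroDivisors R] [CharZero R]

theorem mem_support_pderiv_iff {F : MvPolynomial σ R} {i : σ} {m : σ →₀ ℕ} :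
    m ∈ (pderiv i F).support ↔ m + Finsupp.single i 1 ∈ F.support := by
  refine ⟨add_single_mem_support_of_mem_support_pderiv, fun hm ↦ ?_⟩
  rw [mem_support_iff, coeff_pderiv]
  exact mul_ne_zero (mem_support_iff.1 hm) (Nat.cast_add_one_ne_zero (m i))

theorem exists_mem_support_apply_eq_zero {s : Finset σ} {a : σ → R} {F : MvPolynomial σ R}
    (hF0 : F ≠ 0) (hF : ∑ j ∈ s, a j • pderiv j F = 0) {i : σ} (his : i ∈ s) (hai : a i ≠ 0) :
    ∃ m ∈ F.support, m i = 0 := by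
  obtain ⟨m, hm, m_min⟩ := F.support.exists_min_image (· i) (support_nonempty.2 hF0)
  refine ⟨m, hm, by_contra fun hmi ↦ ?_⟩
  obtain ⟨u, rfl⟩ : ∃ u, m = u + Finsupp.single i 1 :=
    ⟨m - Finsupp.single i 1, (Finsupp.sub_add_single_one_cancel hmi).symm⟩
  have other_terms_vanish : ∀ j ∈ s, j ≠ i → coeff u (a j • pderiv j F) = 0 := by
    intro j _ hji
    have hu : u ∉ (pderiv j F).support := fun hu ↦ by
      simpa [Finsupp.single_eq_of_ne hji.symm] using
        m_min _ (add_single_mem_support_of_mem_support_pderiv hu)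
    rw [coeff_smul, notMem_support_iff.1 hu, smul_zero]
  have coeff_eq_zero : a i * coeff u (pderiv i F) = 0 := by
    rw [← smul_eq_mul, ← coeff_smul, ← Finset.sum_eq_single_of_mem i his other_terms_vanish,
      ← coeff_sum, hF, coeff_zero]
  exact mul_ne_zero hai (mem_support_iff.1 (mem_support_pderiv_iff.2 hm)) coeff_eq_zero

theorem kernel_of_sum_of_derivatives_has_large_support_general {s : Finset σ} {a : σ → R}
    (ha : ∀ i ∈ s, a i ≠ 0) {F : MvPolynomial σ R} (hF : ∑ i ∈ s, a i • pderiv i F = 0)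
    {m : σ →₀ ℕ} (hm : m ∈ F.support) : ∑ i ∈ s, m i + 1 ≤ F.support.card := by
  classical
  induction hk : ∑ i ∈ s, m i generalizing F m with
  | zero => exact Finset.card_pos.2 ⟨m, hm⟩
  | succ k ih =>
    obtain ⟨i, his, hmi⟩ : ∃ i ∈ s, m i ≠ 0 :=
      Finset.exists_ne_zero_of_sum_ne_zero (hk ▸ k.succ_ne_zero)
    obtain ⟨u, rfl⟩ : ∃ u, m = u + Finsupp.single i 1 :=
      ⟨m - Finsupp.single i 1, (Finsupp.sub_add_single_one_cancel hmi).symm⟩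
    have sum_u : ∑ j ∈ s, u j = k := by
      simpa [Finset.sum_add_distrib, Finsupp.single_apply, his] using hk
    obtain ⟨w, hw, hwi⟩ :=
      exists_mem_support_apply_eq_zero (support_nonempty.1 ⟨_, hm⟩) hF his (ha i his)
    calc k + 1 + 1
        ≤ (pderiv i F).support.card + 1 := Nat.succ_le_succ <|
          ih (sum_smul_pderiv_pderiv_eq_zero hF i) (mem_support_pderiv_iff.2 hm) sum_u
      _ ≤ F.support.card := card_support_pderiv_lt hw hwi

end PartialDerivatives

/-- If `F` is a nonzero homogeneous polynomial of degree `d` in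
`K[y_1,…,y_n]` (`K` of characteristic zero) satisfying
`(∂/∂y_1 + ⋯ + ∂/∂y_n)(F) = 0`, then `F` has at least `d + 1` monomials in its support. -/
theorem kernel_of_sum_of_derivatives_has_large_support
    (K : Type*) [Field K] [CharZero K] (n d : ℕ)
    (F : MvPolynomial (Fin n) K) (hF0 : F ≠ 0) (hF : F.IsHomogeneous d)
    (hder : (∑ i : Fin n, pderiv i F) = 0) :
    d + 1 ≤ F.support.card := by
  obtain ⟨m, hm⟩ := support_nonempty.2 hF0
  have degree_m : ∑ i, m i = d := by
    simpa [Finsupp.weight_apply, Finsupp.sum_fintype] using hF (mem_support_iff.1 hm)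
  rw [← degree_m]
  exact kernel_of_sum_of_derivatives_has_large_support_general (a := 1)
    (fun _ _ ↦ one_ne_zero) (by simpa using hder) hm
end

section
/- Let K be a field and let I ⊂ S = K[x_1,…,x_n] be a monomial ideal generated in a single degree d such that 𝔪^{d+1} ⊆ I, where 𝔪 = (x_1,…,x_n). Then there is no monomial m of degree d and index k with: m ∉ I, x_k does not divide m, and for every index i with x_i dividing m the monomial (x_k·m)/x_i does not belong to I. (Indeed, such an m would force the degree-(d+1) monomial x_k·m to lie outside I, contradicting 𝔪^{d+1} ⊆ I.) -/
open MvPolynomial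

/-!
A monomial of a monomial ideal that is not itself one of the generators is a proper multiple of a
generator, so it stays in the ideal after division by a suitable variable. As `x_k·m` has degree
`d + 1`, it lies in `𝔪^{d+1} ⊆ I` but is not a generator of `I`; hence `(x_k·m)/x_i ∈ I` for some
`x_i` dividing `x_k·m`, and either `i = k`, which gives `m ∈ I`, or `x_i` divides `m`.
-/

section MonomialIdeal

variable {σ R : Type*} [CommSemiring R]

theorem exists_mem_support_le_tsub_single_of_lt {g t : σ →₀ ℕ} (hgt : g < t) :
    ∃ i ∈ t.support, g ≤ t - Finsupp.single i 1 := by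
  classical
  obtain ⟨hle, i, hi⟩ := Finsupp.lt_def.mp hgt
  refine ⟨i, Finsupp.mem_support_iff.mpr hi.ne_bot, fun j => ?_⟩
  rw [Finsupp.tsub_apply, Finsupp.single_apply]
  split_ifs with hij
  · exact hij ▸ Nat.le_sub_one_of_lt hi
  · exact hle j

theorem monomial_one_mem_span_monomial_image_iff [Nontrivial R] {G : Set (σ →₀ ℕ)}
    {t : σ →₀ ℕ} :
    monomial t (1 : R) ∈ Ideal.span ((fun s => monomial s (1 : R)) '' G) ↔ ∃ g ∈ G, g ≤ t := by
  classical
  simp [mem_ideal_span_monomial_image, support_monomial]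

theorem exists_monomial_tsub_single_mem_span_of_notMem [Nontrivial R] {G : Set (σ →₀ ℕ)}
    {t : σ →₀ ℕ} (ht : monomial t (1 : R) ∈ Ideal.span ((fun s => monomial s (1 : R)) '' G))
    (htG : t ∉ G) :
    ∃ i ∈ t.support, monomial (t - Finsupp.single i 1) (1 : R) ∈
      Ideal.span ((fun s => monomial s (1 : R)) '' G) := by
  obtain ⟨g, hgG, hgt⟩ := monomial_one_mem_span_monomial_image_iff.mp ht
  obtain ⟨i, hi, hgi⟩ :=
    exists_mem_support_le_tsub_single_of_lt (hgt.lt_of_ne (ne_of_mem_of_not_mem hgG htG))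
  exact ⟨i, hi, monomial_one_mem_span_monomial_image_iff.mpr ⟨g, hgG, hgi⟩⟩

theorem no_socle_monomial_missing_a_variable_general [Nontrivial R] {d : ℕ}
    {I : Ideal (MvPolynomial σ R)}
    (hmon : ∃ G : Set (σ →₀ ℕ), (∀ g ∈ G, g.degree ≤ d) ∧
      I = Ideal.span ((fun s => monomial s (1 : R)) '' G))
    (hreg : idealOfVars σ R ^ (d + 1) ≤ I) :
    ¬ ∃ (s : σ →₀ ℕ) (k : σ), s.degree = d ∧ monomial s (1 : R) ∉ I ∧
      ∀ i, 1 ≤ s i → monomial (s + Finsupp.single k 1 - Finsupp.single i 1) (1 : R) ∉ I := by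
  rintro ⟨s, k, hsd, hsI, hdiv⟩
  obtain ⟨G, hG, rfl⟩ := hmon
  have hdeg : (s + Finsupp.single k 1).degree = d + 1 := by
    rw [map_add, Finsupp.degree_single, hsd]
  have hmem := hreg ((monomial_mem_pow_idealOfVars_iff (d + 1) _ (one_ne_zero' R)).mpr hdeg.ge)
  have hnotGen : s + Finsupp.single k 1 ∉ G := fun h => by
    have := hG _ h
    omega
  obtain ⟨i, hi, hiI⟩ := exists_monomial_tsub_single_mem_span_of_notMem hmem hnotGen
  obtain rfl | hik := eq_or_ne i k
  · exact hsI (by rwa [add_tsub_cancel_right] at hiI)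
  · have hsi : s i ≠ 0 := by simpa [Finsupp.single_eq_of_ne hik] using hi
    exact hdiv i (Nat.one_le_iff_ne_zero.mpr hsi) hiI

end MonomialIdeal

/-- Let `I ⊆ K[x_1,…,x_n]` be a monomial ideal generated in the single
degree `d` with `𝔪^{d+1} ⊆ I`, where `𝔪 = (x_1,…,x_n)`. Then there is no degree-`d`
monomial `m` (given by its exponent vector `s`) and index `k` such that `m ∉ I`,
`x_k ∤ m`, and `(x_k·m)/x_i ∉ I` for every `i` with `x_i ∣ m`. -/
theorem no_socle_monomial_missing_a_variable
    (K : Type*) [Field K] (n d : ℕ)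
    (I : Ideal (MvPolynomial (Fin n) K))
    (hmon : ∃ G : Set (Fin n →₀ ℕ), (∀ s ∈ G, (s.sum fun _ v => v) = d) ∧
      I = Ideal.span ((fun s => monomial s (1 : K)) '' G))
    (hreg : (Ideal.span (Set.range (X : Fin n → MvPolynomial (Fin n) K))) ^ (d + 1) ≤ I) :
    ¬ ∃ (s : Fin n →₀ ℕ) (k : Fin n),
      (s.sum fun _ v => v) = d ∧
      monomial s (1 : K) ∉ I ∧
      s k = 0 ∧
      (∀ i : Fin n, 1 ≤ s i →
        monomial (s + Finsupp.single k 1 - Finsupp.single i 1) (1 : K) ∉ I) := by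
  obtain ⟨G, hG, hI⟩ := hmon
  exact fun ⟨s, k, hsd, hsI, _, hdiv⟩ => no_socle_monomial_missing_a_variable_general
    ⟨G, fun g hg => (hG g hg).le, hI⟩ hreg ⟨s, k, hsd, hsI, hdiv⟩
end

section
/- Let K be a field and let I ⊂ S = K[x_1,…,x_n] be a monomial ideal generated in a single degree d. Let r ≥ 0 be an integer with r + 1 ≤ d. If every monomial of degree d not contained in I has support of cardinality at least r+1, then the Hilbert function satisfies H_{S/I}(d) ≤ C(n, r+1) · H_{S/I}(d−r−1), where C(n, r+1) is a binomial coefficient. -/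
open MvPolynomial

/-! Let `E_k` be the span of the squarefree monomials of degree `k`, so `dim E_k = C(n, k)`. A
monomial whose support has at least `k` elements is a squarefree monomial of degree `k` times
another monomial. Hence, under the support condition, `(S/I)_{m+k}` lies in the product of the
image of `E_k` with `(S/I)_m`, and the dimension of a product of subspaces of an algebra is at most
the product of their dimensions. -/

open Finset Module

theorem finrank_mul_le_finrank_mul_finrank {K A : Type*} [Field K] [Ring A] [Algebra K A]
    (M N : Submodule K A) [FiniteDimensional K M] [FiniteDimensional K N] :
    finrank K ↥(M * N) ≤ finrank K M * finrank K N := by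
  rw [← Submodule.mulMap_range, ← finrank_tensorProduct]
  exact LinearMap.finrank_range_le _

section Monomials

variable {σ R : Type*} [CommSemiring R]

theorem sum_single_one_le_of_subset_support {s : σ →₀ ℕ} {T : Finset σ} (hT : T ⊆ s.support) :
    ∑ i ∈ T, Finsupp.single i 1 ≤ s := by
  classical
  intro i
  rw [Finsupp.finsetSum_apply]
  simp only [Finsupp.single_apply, sum_ite_eq']
  split_ifs with hi
  · exact Nat.one_le_iff_ne_zero.mpr (Finsupp.mem_support_iff.mp (hT hi))
  · exact Nat.zero_le _

theorem exists_monomial_eq_prod_X_mul {s : σ →₀ ℕ} {T : Finset σ} (hT : T ⊆ s.support) :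
    ∃ t : σ →₀ ℕ, s.degree = t.degree + #T ∧
      ∀ a : R, monomial s a = (∏ i ∈ T, X i) * monomial t a := by
  obtain ⟨t, rfl⟩ := exists_add_of_le (sum_single_one_le_of_subset_support hT)
  refine ⟨t, ?_, fun a => ?_⟩
  · simp [add_comm]
  · simp only [X, ← monomial_sum_one, monomial_mul, one_mul]

variable (σ R) in
/-- The span of the squarefree monomials of degree `k` in `R[σ]`, encoded as the products of the
variables in a `k`-element set. -/
noncomputable def squarefreeSubmodule (k : ℕ) : Submodule R (MvPolynomial σ R) :=
  Submodule.span R (Set.range fun T : {T : Finset σ // #T = k} => ∏ i ∈ T.1, X i)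

theorem squarefreeSubmodule_fg [Finite σ] (k : ℕ) : (squarefreeSubmodule σ R k).FG :=
  Submodule.fg_span (Set.finite_range _)

theorem monomial_mem_squarefreeSubmodule_mul {s : σ →₀ ℕ} {m k : ℕ}
    (hdeg : s.degree = m + k) (hk : k ≤ #s.support) (a : R) :
    monomial s a ∈ squarefreeSubmodule σ R k * homogeneousSubmodule σ R m := by
  obtain ⟨T, hT, rfl⟩ := exists_subset_card_eq hk
  obtain ⟨t, ht, hmul⟩ := exists_monomial_eq_prod_X_mul (R := R) hT
  rw [hmul]
  exact Submodule.mul_mem_mul (Submodule.subset_span ⟨⟨T, rfl⟩, rfl⟩)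
    (isHomogeneous_monomial a (by omega))

end Monomials

theorem finrank_squarefreeSubmodule_le {σ R : Type*} [Fintype σ] [CommRing R] [Nontrivial R]
    (k : ℕ) : finrank R (squarefreeSubmodule σ R k) ≤ (Fintype.card σ).choose k := by
  rw [← Fintype.card_finset_len]
  exact finrank_range_le_card _

section Quotient

variable {σ R : Type*} [CommRing R]

/-- The degree-`m` component of `R[σ] ⧸ I`, for an arbitrary ideal `I`: the image of the
homogeneous polynomials of degree `m`. With a natural number as degree and any variables, it
extends `gradedPiece` in nonnegative degrees. -/
noncomputable def quotientComponent (I : Ideal (MvPolynomial σ R)) (m : ℕ) :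
    Submodule R (MvPolynomial σ R ⧸ I) :=
  (homogeneousSubmodule σ R m).map (Ideal.Quotient.mkₐ R I).toLinearMap

theorem quotientComponent_fg [Finite σ] (I : Ideal (MvPolynomial σ R)) (m : ℕ) :
    (quotientComponent I m).FG :=
  (homogeneousSubmodule_fg σ R m).map _

theorem quotientComponent_add_le_mul {I : Ideal (MvPolynomial σ R)} {m k : ℕ}
    (hsupp : ∀ s : σ →₀ ℕ, s.degree = m + k → monomial s (1 : R) ∉ I → k ≤ #s.support) :
    quotientComponent I (m + k) ≤
      (squarefreeSubmodule σ R k).map (Ideal.Quotient.mkₐ R I).toLinearMap *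
        quotientComponent I m := by
  rintro _ ⟨p, hp, rfl⟩
  rw [quotientComponent, ← Submodule.map_mul, p.as_sum, map_sum]
  refine Submodule.sum_mem _ fun s hs => ?_
  have hdeg : s.degree = m + k := by
    rw [Finsupp.degree_eq_weight_one]
    exact hp (mem_support_iff.mp hs)
  by_cases hsI : monomial s (1 : R) ∈ I
  · have hmem : monomial s (coeff s p) ∈ I := by
      simpa only [C_mul_monomial, mul_one] using I.mul_mem_left (C (coeff s p)) hsI
    have hzero : (Ideal.Quotient.mkₐ R I).toLinearMap (monomial s (coeff s p)) = 0 :=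
      Ideal.Quotient.eq_zero_iff_mem.mpr hmem
    exact hzero ▸ Submodule.zero_mem _
  · exact Submodule.mem_map_of_mem
      (monomial_mem_squarefreeSubmodule_mul hdeg (hsupp s hdeg hsI) _)

end Quotient

theorem gradedPiece_natCast_s13 {K : Type*} [Field K] {n : ℕ} (I : Ideal (MvPolynomial (Fin n) K))
    (m : ℕ) : gradedPiece I (m : ℤ) = quotientComponent I m := by
  simp [gradedPiece, quotientComponent]

theorem hilbert_function_bound_from_support_condition_general {σ K : Type*} [Fintype σ] [Field K]
    {I : Ideal (MvPolynomial σ K)} {m k : ℕ}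
    (hsupp : ∀ s : σ →₀ ℕ, s.degree = m + k → monomial s (1 : K) ∉ I → k ≤ #s.support) :
    finrank K (quotientComponent I (m + k)) ≤
      (Fintype.card σ).choose k * finrank K (quotientComponent I m) := by
  let E := squarefreeSubmodule σ K k
  let π := (Ideal.Quotient.mkₐ K I).toLinearMap
  have : FiniteDimensional K E := .of_fg (squarefreeSubmodule_fg k)
  have : FiniteDimensional K (quotientComponent I m) := .of_fg (quotientComponent_fg I m)
  have : FiniteDimensional K ↥(E.map π * quotientComponent I m) :=
    .of_fg (((squarefreeSubmodule_fg k).map π).mul (quotientComponent_fg I m))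
  calc finrank K (quotientComponent I (m + k))
      ≤ finrank K ↥(E.map π * quotientComponent I m) :=
        Submodule.finrank_mono (quotientComponent_add_le_mul hsupp)
    _ ≤ finrank K (E.map π) * finrank K (quotientComponent I m) :=
        finrank_mul_le_finrank_mul_finrank _ _
    _ ≤ finrank K E * finrank K (quotientComponent I m) := by
        gcongr
        exact Submodule.finrank_map_le π E
    _ ≤ (Fintype.card σ).choose k * finrank K (quotientComponent I m) := by
        gcongr
        exact finrank_squarefreeSubmodule_le k

/-- Let `I ⊆ K[x_1,…,x_n]` be a monomial ideal generated in the single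
degree `d`, and let `r ≥ 0` with `r + 1 ≤ d`. If every degree-`d` monomial not in `I` has
support of cardinality at least `r + 1`, then
`H_{S/I}(d) ≤ C(n, r+1) · H_{S/I}(d - r - 1)`. -/
theorem hilbert_function_bound_from_support_condition
    (K : Type*) [Field K] (n d r : ℕ) (hrd : r + 1 ≤ d)
    (I : Ideal (MvPolynomial (Fin n) K))
    (hmon : ∃ G : Set (Fin n →₀ ℕ), (∀ s ∈ G, (s.sum fun _ v => v) = d) ∧
      I = Ideal.span ((fun s => monomial s (1 : K)) '' G))
    (hsupp : ∀ s : Fin n →₀ ℕ, (s.sum fun _ v => v) = d → monomial s (1 : K) ∉ I →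
      r + 1 ≤ s.support.card) :
    Module.finrank K ↥(gradedPiece I (d : ℤ)) ≤
      Nat.choose n (r + 1) * Module.finrank K ↥(gradedPiece I ((d : ℤ) - r - 1)) := by
  obtain ⟨m, rfl⟩ := Nat.exists_eq_add_of_le' hrd
  have hdiff : ((m + (r + 1) : ℕ) : ℤ) - r - 1 = m := by push_cast; ring
  rw [hdiff, gradedPiece_natCast_s13, gradedPiece_natCast_s13]
  simpa using hilbert_function_bound_from_support_condition_general hsupp
end
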